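/- arXiv:2010.00849 — 7 statements merged into one kernel-verified Lean document; each statement's English description precedes it below -/
import Mathlib

section
/- Let 𝔤 be a finite-dimensional reductive complex Lie algebra, let g be an automorphism of 𝔤 of finite order, let 𝔤₀ := 𝔤^g be the fixed-point subalgebra, and let 𝓗₀ be a Cartan subalgebra of 𝔤₀. Then the centralizer C_𝔤(𝓗₀) is a Cartan subalgebra of 𝔤. -/
/-- A finite-dimensional Lie algebra is *reductive* if its (solvable) radical equals its
centre. -/
def LieAlgebra.IsReductive (R L : Type*) [CommRing R] [LieRing L] [LieAlgebra R L] : Prop :=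
  LieAlgebra.radical R L = LieAlgebra.center R L

variable {L : Type*} [LieRing L] [LieAlgebra ℂ L]

/-- The fixed-point subalgebra `L^g` of a Lie algebra automorphism `g`. -/
def LieEquiv.fixedSubalgebra (g : L ≃ₗ⁅ℂ⁆ L) : LieSubalgebra ℂ L where
  carrier := {x | g x = x}
  add_mem' := by
    intro a b ha hb
    simp only [Set.mem_setOf_eq] at ha hb ⊢
    show g.toLinearEquiv (a + b) = a + b
    rw [map_add]
    show g a + g b = a + b
    rw [ha, hb]
  zero_mem' := by
    show g.toLinearEquiv 0 = 0
    exact map_zero _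
  smul_mem' := by
    intro c x hx
    simp only [Set.mem_setOf_eq] at hx ⊢
    show g.toLinearEquiv (c • x) = c • x
    rw [map_smul]
    show c • g x = c • x
    rw [hx]
  lie_mem' := by
    intro x y hx hy
    simp only [Set.mem_setOf_eq] at hx hy ⊢
    rw [g.map_lie, hx, hy]

/-- The centralizer `C_L(s)` of a subset `s` of a Lie algebra `L`. -/
def lieSetCentralizer (s : Set L) : LieSubalgebra ℂ L where
  carrier := {x | ∀ y ∈ s, ⁅x, y⁆ = 0}
  add_mem' := by
    intro a b ha hb y hy
    rw [add_lie, ha y hy, hb y hy, add_zero]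
  zero_mem' := by
    intro y hy
    rw [zero_lie]
  smul_mem' := by
    intro c x hx y hy
    rw [smul_lie, hx y hy, smul_zero]
  lie_mem' := by
    intro x y hx hy z hz
    rw [lie_lie, hx z hz, hy z hz, lie_zero, lie_zero, sub_zero]


namespace FixCartan

lemma nt (N : ℕ) (hN : 0 < N) (i j : ℕ) : ∃ k m : ℕ, (i + k * j) * m ≡ j [MOD N] := by
  rcases Nat.eq_zero_or_pos j with rfl | hj
  · exact ⟨0, 0, by simpa using Nat.ModEq.refl _⟩
  obtain ⟨d, i', j', hd, hc, rfl, rfl⟩ := Nat.exists_coprime' (m := i) (n := j) (Nat.gcd_pos_of_pos_right _ hj)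
  have hj' : 0 < j' := Nat.pos_of_mul_pos_right hj
  have : NeZero (j' * N) := ⟨(Nat.mul_pos hj' hN).ne'⟩
  obtain ⟨u, hu⟩ := ZMod.unitsMap_surjective (Dvd.intro N rfl : j' ∣ j' * N) (ZMod.unitOfCoprime i' hc)
  have h1 := ZMod.val_coe_unit_coprime u
  have h2 : (u : ZMod (j' * N)).val ≡ i' [MOD j'] := by
    rw [← ZMod.natCast_eq_natCast_iff]
    have := congrArg Units.val hu
    simpa [ZMod.unitsMap_def, ZMod.natCast_val] using this
  set v := (u : ZMod (j' * N)).val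
  have h3 : i' ≤ v + i' * (j' * N) := by
    have := Nat.le_mul_of_pos_right i' (Nat.mul_pos hj' hN)
    omega
  have h4 : i' ≡ v + i' * (j' * N) [MOD j'] := by
    refine h2.symm.trans ?_
    exact (Nat.modEq_iff_dvd' (Nat.le_add_right _ _)).2 (by
      rw [Nat.add_sub_cancel_left]; exact Dvd.intro (i' * N) (by ring))
  obtain ⟨k, hk⟩ := (Nat.modEq_iff_dvd' h3).1 h4
  have h5 : i' + k * j' = v + i' * (j' * N) := by
    rw [mul_comm k, ← hk]; omega
  have h6 : (i' + k * j').Coprime N := by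
    rw [h5]
    have : v.Coprime N := h1.coprime_dvd_right (Dvd.intro_left j' rfl)
    have h7 : v + i' * (j' * N) = v + N * (i' * j') := by ring
    rw [h7]; simpa using this
  rcases Nat.lt_or_ge 1 N with h1N | h1N
  · obtain ⟨m, -, hm⟩ := Nat.exists_mul_mod_eq_one_of_coprime h6 h1N
    refine ⟨k, m * j', ?_⟩
    have hm' : (i' + k * j') * m ≡ 1 [MOD N] := by
      rw [Nat.ModEq, hm, Nat.mod_eq_of_lt h1N]
    have := (hm'.mul_right (j' * d))
    convert this using 1 <;> ring
  · refine ⟨0, 0, ?_⟩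
    have : N = 1 := by omega
    subst this; exact Nat.modEq_one

open LieAlgebra Module Module.End

section

attribute [local instance] LieRing.ofAssociativeRing

lemma jordan {L : Type*} [LieRing L] [LieAlgebra ℂ L] [FiniteDimensional ℂ L] [IsKilling ℂ L]
    (x : L) : ∃ n : L, IsNilpotent (ad ℂ L n) ∧ (∀ y : L, ⁅x, y⁆ = 0 → ⁅n, y⁆ = 0) ∧
      (∀ y : L, ⁅x - n, ⁅x - n, y⁆⁆ = 0 → ⁅x - n, y⁆ = 0) ∧
      ∀ (g : L ≃ₗ⁅ℂ⁆ L) (c : ℂ), g x = c • x → g n = c • n := by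
  obtain ⟨N, hN₀, S, hS₀', hN, hS, hSN⟩ := (ad ℂ L x).exists_isNilpotent_isSemisimple
  have hS₀ : Commute (ad ℂ L x) S := Algebra.commute_of_mem_adjoin_self hS₀'
  have hNx : N = ad ℂ L x - S := eq_sub_of_add_eq hSN.symm
  have hNS : Commute N S :=
    Algebra.commute_of_mem_adjoin_singleton_of_commute hS₀' (Algebra.commute_of_mem_adjoin_self hN₀).symm
  have hN' := hN
  rw [hNx] at hN'
  have aux {α : ℂ} {y : L} (hy : y ∈ (ad ℂ L x).maxGenEigenspace α) : S y = α • y := by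
    rw [maxGenEigenspace_eq] at hy
    rw [apply_eq_of_mem_of_comm_of_isFinitelySemisimple_of_isNil hy hS₀ hS.isFinitelySemisimple hN']
  have h_top : ⨆ α, (ad ℂ L x).maxGenEigenspace α = ⊤ := iSup_maxGenEigenspace_eq_top _
  have h_der (y z : L) : S ⁅y, z⁆ = ⁅S y, z⁆ + ⁅y, S z⁆ := by
    have hy : y ∈ ⨆ α, (ad ℂ L x).maxGenEigenspace α := by simp [h_top]
    have hz : z ∈ ⨆ α, (ad ℂ L x).maxGenEigenspace α := by simp [h_top]
    induction hy using Submodule.iSup_induction' with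
    | mem α y hy =>
      induction hz using Submodule.iSup_induction' with
      | mem β z hz =>
        have hyz : ⁅y, z⁆ ∈ (ad ℂ L x).maxGenEigenspace (α + β) :=
          LieModule.lie_mem_maxGenEigenspace_toEnd (R := ℂ) (L := L) (M := L) hy hz
        rw [aux hy, aux hz, aux hyz, smul_lie, lie_smul, ← add_smul]
      | zero => simp
      | add _ _ _ _ h h' => simp only [lie_add, map_add, h, h']; abel
    | zero => simp
    | add _ _ _ _ h h' => simp only [add_lie, map_add, h, h']; abel
  replace h_der : ∀ y z : L, S ⁅y, z⁆ = ⁅y, S z⁆ - ⁅z, S y⁆ := by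
    simp_rw [← lie_skew (S _) _, add_comm, ← sub_eq_add_neg] at h_der; assumption
  let S' : LieDerivation ℂ L L := ⟨S, h_der⟩
  obtain ⟨s, hs⟩ := LieDerivation.IsKilling.exists_eq_ad S'
  replace hs : S = ad ℂ L s := by rw [← LieDerivation.coe_ad_apply_eq_ad_apply s, hs]
  have hn : ad ℂ L (x - s) = N := by rw [map_sub, ← hs, hNx]
  have inj (a b : L) (h : ad ℂ L a = ad ℂ L b) : a = b := by
    rw [← sub_eq_zero, ← map_sub] at h
    have : a - b ∈ (ad ℂ L).ker := h
    rw [ad_ker_eq_bot_of_hasTrivialRadical] at this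
    exact sub_eq_zero.1 (by simpa using this)
  refine ⟨x - s, hn ▸ hN, fun y hy => ?_, fun y => ?_, fun g c hg => ?_⟩
  · have h1 : Commute (ad ℂ L y) (ad ℂ L x) := by
      rw [commute_iff_lie_eq, ← LieHom.map_lie, ← lie_skew, hy]; simp
    have h2 : Commute (ad ℂ L y) N := Algebra.commute_of_mem_adjoin_singleton_of_commute hN₀ h1
    rw [← hn, commute_iff_lie_eq, ← LieHom.map_lie] at h2
    have := inj ⁅y, x - s⁆ 0 (by rw [h2, map_zero])
    rw [← lie_skew, this, neg_zero]
  · rw [sub_sub_cancel]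
    intro h
    have h1 : y ∈ S.genEigenspace 0 (2 : ℕ) := by
      rw [mem_genEigenspace_nat]
      simpa [pow_two, hs] using h
    rw [hS.isFinitelySemisimple.genEigenspace_eq_eigenspace 0 (by simp)] at h1
    simpa [hs] using h1
  · have hg' := conj_ad_apply (R := ℂ) g x
    rw [hg, map_smul, hSN, map_add, smul_add] at hg'
    have hu := Module.End.isNilpotent_isSemisimple_unique (n₁ := g.toLinearEquiv.conj N) (s₁ := g.toLinearEquiv.conj S) (n₂ := c • N) (s₂ := c • S) ?_ ?_ ?_ ?_ ?_ ?_ hg'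
    · apply inj
      rw [← conj_ad_apply, map_smul, hn, ← hu.1]
    · obtain ⟨k, hk⟩ := hN
      exact ⟨k, by
        have : ∀ m : ℕ, g.toLinearEquiv.conj (N ^ m) = g.toLinearEquiv.conj N ^ m := by
          intro m
          induction m with
          | zero => exact LinearEquiv.conj_id _
          | succ m ih => rw [pow_succ, pow_succ, ← ih]; exact LinearEquiv.conj_comp _ _ _
        rw [← this, hk, map_zero]⟩
    · refine (LinearEquiv.isSemisimple_iff (f := S) _ g.toLinearEquiv ?_).1 hS
      ext y
      have : g.toLinearEquiv.symm (g y) = y := g.toLinearEquiv.symm_apply_apply y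
      simp [LinearEquiv.conj_apply, this]
    · exact hN.smul c
    · exact IsSemisimple_smul c hS
    · have := congrArg g.toLinearEquiv.conj hNS.eq
      exact (LinearEquiv.conj_comp _ _ _).symm.trans (this.trans (LinearEquiv.conj_comp _ _ _))
    · exact (hNS.smul_left c).smul_right c

end

end FixCartan

namespace FixCartan
open LieAlgebra Module Module.End

section
attribute [local instance] LieRing.ofAssociativeRing

section avg

variable {L : Type*} [AddCommGroup L] [Module ℂ L]

/-- Projection onto the `c`-eigenspace of an endomorphism of finite order. -/
noncomputable def avg (g : L →ₗ[ℂ] L) (N : ℕ) (c : ℂ) (y : L) : L :=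
  (N : ℂ)⁻¹ • ∑ k ∈ Finset.range N, (c⁻¹) ^ k • (⇑g)^[k] y

lemma avg_eigen (g : L →ₗ[ℂ] L) (N : ℕ) (hg : ∀ x, (⇑g)^[N] x = x)
    (c : ℂ) (hc : c ^ N = 1) (hc0 : c ≠ 0) (y : L) : g (avg g N c y) = c • avg g N c y := by
  unfold avg
  rw [map_smul, smul_comm c]
  congr 1
  rw [map_sum, Finset.smul_sum]
  have h1 := Finset.sum_range_succ (fun k => c • ((c⁻¹) ^ k • (⇑g)^[k] y)) N
  have h2 := Finset.sum_range_succ' (fun k => c • ((c⁻¹) ^ k • (⇑g)^[k] y)) N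
  rw [h1] at h2
  have h3 : (c⁻¹) ^ N = 1 := by rw [inv_pow, hc, inv_one]
  simp only [hg, h3, pow_zero, Function.iterate_zero, id] at h2
  rw [add_right_cancel h2]
  refine Finset.sum_congr rfl fun k _ => ?_
  rw [map_smul, Function.iterate_succ_apply', smul_smul, pow_succ']
  congr 1
  field_simp

lemma avg_mem (g : L →ₗ[ℂ] L) (N : ℕ) (c : ℂ) (y : L) (W : Submodule ℂ L)
    (hW : ∀ w ∈ W, g w ∈ W) (hy : y ∈ W) : avg g N c y ∈ W := by
  have h : ∀ k, (⇑g)^[k] y ∈ W := by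
    intro k
    induction k with
    | zero => simpa using hy
    | succ k ih => rw [Function.iterate_succ_apply']; exact hW _ ih
  exact W.smul_mem _ (W.sum_mem fun k _ => W.smul_mem _ (h k))

lemma avg_map {V : Type*} [AddCommGroup V] [Module ℂ V] (g : L →ₗ[ℂ] L) (N : ℕ) (hN : 0 < N)
    (c : ℂ) (hc0 : c ≠ 0) (φ : L →ₗ[ℂ] V) (hφ : ∀ w, φ (g w) = c • φ w) (y : L) :
    φ (avg g N c y) = φ y := by
  have h1 : ∀ k, φ ((⇑g)^[k] y) = c ^ k • φ y := by
    intro k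
    induction k with
    | zero => simp
    | succ k ih => rw [Function.iterate_succ_apply', hφ, ih, smul_smul, pow_succ']
  unfold avg
  rw [map_smul, map_sum]
  have h2 : ∀ k ∈ Finset.range N, φ ((c⁻¹) ^ k • (⇑g)^[k] y) = φ y := by
    intro k _
    rw [map_smul, h1, smul_smul, ← mul_pow, inv_mul_cancel₀ hc0, one_pow, one_smul]
  rw [Finset.sum_congr rfl h2, Finset.sum_const, Finset.card_range, ← Nat.cast_smul_eq_nsmul ℂ,
    smul_smul, inv_mul_cancel₀ (by exact_mod_cast hN.ne'), one_smul]

lemma sum_avg (g : L →ₗ[ℂ] L) (N : ℕ) (hN : 0 < N) (ζ : ℂ) (hζ : IsPrimitiveRoot ζ N) (y : L) :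
    ∑ j ∈ Finset.range N, avg g N (ζ ^ j) y = y := by
  unfold avg
  rw [← Finset.smul_sum, Finset.sum_comm]
  simp_rw [← Finset.sum_smul]
  rw [Finset.sum_eq_single 0]
  · simp only [pow_zero, Finset.sum_const, Finset.card_range, Function.iterate_zero, id]
    rw [smul_smul, nsmul_one, inv_mul_cancel₀ (by exact_mod_cast hN.ne'), one_smul]
  · intro k hk hk0
    rw [Finset.mem_range] at hk
    have h1 : ∀ j, ((ζ ^ j)⁻¹) ^ k = ((ζ⁻¹) ^ k) ^ j := by
      intro j
      rw [← inv_pow, ← pow_mul, ← pow_mul, mul_comm]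
    simp_rw [h1]
    have hne : (ζ⁻¹) ^ k ≠ 1 := hζ.inv.pow_ne_one_of_pos_of_lt hk0 hk
    have h2 := mul_geom_sum ((ζ⁻¹) ^ k) N
    rw [← pow_mul, mul_comm k, pow_mul, hζ.inv.pow_eq_one, one_pow, sub_self] at h2
    rw [(mul_eq_zero.1 h2).resolve_left (sub_ne_zero.2 hne), zero_smul]
  · intro h; exact absurd (Finset.mem_range.2 hN) h

end avg

section core

variable {L : Type*} [LieRing L] [LieAlgebra ℂ L] [FiniteDimensional ℂ L]

lemma zero_ind (H : LieSubalgebra ℂ L) [LieRing.IsNilpotent H] (W : L → Prop) (h0 : W 0)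
    (hs : ∀ y, (∀ h ∈ H, W ⁅h, y⁆) → W y) :
    ∀ y ∈ LieModule.genWeightSpace L (0 : H → ℂ), W y := by
  obtain ⟨k, hk⟩ := (LieModule.genWeightSpace L (0 : H → ℂ)).isNilpotent_iff_exists_self_le_ucs.mp
    (by infer_instance)
  suffices ∀ k, ∀ y ∈ (⊥ : LieSubmodule ℂ H L).ucs k, W y from fun y hy => this k y (hk hy)
  intro k
  induction k with
  | zero => intro y hy; rw [LieSubmodule.ucs_zero, LieSubmodule.mem_bot] at hy; rwa [hy]
  | succ k ih =>
    intro y hy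
    rw [LieSubmodule.ucs_succ, LieSubmodule.mem_normalizer] at hy
    exact hs y fun h hh => ih _ (hy ⟨h, hh⟩)

/-- To vanish against everything, it suffices to vanish against the zero weight space. -/
lemma perp_of_perp_zero [IsKilling ℂ L] (H : LieSubalgebra ℂ L) [LieRing.IsNilpotent H] (x : L)
    (hx : x ∈ LieModule.genWeightSpace L (0 : H → ℂ))
    (h : ∀ y ∈ LieModule.genWeightSpace L (0 : H → ℂ), killingForm ℂ L x y = 0) : x = 0 := by
  have hc : Codisjoint (LieModule.genWeightSpace L (0 : H → ℂ)) (LieModule.posFittingComp ℂ H L) :=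
    (LieModule.isCompl_genWeightSpace_zero_posFittingComp ℂ H L).codisjoint
  have hker : x ∈ LinearMap.ker (killingForm ℂ L) := by
    rw [LinearMap.mem_ker]
    ext y
    have hy : y ∈ LieModule.genWeightSpace L (0 : H → ℂ) ⊔ LieModule.posFittingComp ℂ H L := by
      rw [codisjoint_iff.1 hc]; trivial
    obtain ⟨a, ha, b, hb, rfl⟩ := (LieSubmodule.mem_sup _ _ _).1 hy
    rw [map_add, h a ha, killingForm_eq_zero_of_mem_zeroRoot_mem_posFitting ℂ L H hx hb]
    simp
  simpa using hker

lemma killing_nil {n y : L} (hn : IsNilpotent (ad ℂ L n)) (h : ⁅n, y⁆ = 0) :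
    killingForm ℂ L n y = 0 := by
  have h1 : Commute (ad ℂ L n) (ad ℂ L y) := by
    rw [commute_iff_lie_eq, ← LieHom.map_lie, h]; simp
  have := h1.isNilpotent_mul_right hn
  rw [killingForm_apply_apply]
  exact (LinearMap.isNilpotent_trace_of_isNilpotent this).eq_zero

lemma pow_of_P {x : L} (hP : ∀ y : L, ⁅x, ⁅x, y⁆⁆ = 0 → ⁅x, y⁆ = 0) (k : ℕ) (y : L)
    (h : (fun z => ⁅x, z⁆)^[k] ⁅x, y⁆ = 0) : ⁅x, y⁆ = 0 := by
  induction k with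
  | zero => exact h
  | succ k ih =>
    apply ih
    cases k with
    | zero => exact hP _ h
    | succ k =>
      rw [Function.iterate_succ_apply'] at h ⊢
      rw [Function.iterate_succ_apply'] at h
      exact hP _ h

theorem core [IsKilling ℂ L] (g : L ≃ₗ⁅ℂ⁆ L) (N : ℕ) (hN : 0 < N) (hg : ∀ x, (⇑g)^[N] x = x)
    (H : LieSubalgebra ℂ L) [LieRing.IsNilpotent H] (hfix : ∀ h ∈ H, g h = h)
    (hself : ∀ x, g x = x → (∀ h ∈ H, ⁅x, h⁆ ∈ H) → x ∈ H) :
    (∀ h ∈ H, ∀ y : L, ⁅h, ⁅h, y⁆⁆ = 0 → ⁅h, y⁆ = 0) ∧ (∀ h ∈ H, ∀ h' ∈ H, ⁅h, h'⁆ = 0) ∧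
    ∀ x y : L, (∀ h ∈ H, ⁅x, h⁆ = 0) → (∀ h ∈ H, ⁅y, h⁆ = 0) → ⁅x, y⁆ = 0 := by
  let G : L →ₗ[ℂ] L := (g : L →ₗ⁅ℂ⁆ L)
  have hG : ∀ x, (⇑G)^[N] x = x := hg
  have hGg : ∀ x, G x = g x := fun _ => rfl
  have hadd : ∀ (c : ℂ) x, g (c • x) = c • g x := fun c x => G.map_smul c x
  have hZG : ∀ y ∈ LieModule.genWeightSpace L (0 : H → ℂ),
      G y ∈ LieModule.genWeightSpace L (0 : H → ℂ) := by
    refine zero_ind H _ (by simp) ?_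
    intro y hy
    rw [← LieModule.genWeightSpace_zero_normalizer_eq_self, LieSubmodule.mem_normalizer]
    intro h
    have := hy h h.2
    rwa [hGg, LieEquiv.map_lie, hfix h h.2] at this
  have hZH : ∀ y ∈ LieModule.genWeightSpace L (0 : H → ℂ), g y = y → y ∈ H := by
    refine zero_ind H _ (fun _ => H.zero_mem) ?_
    intro y hy hgy
    refine hself y hgy fun h hh => ?_
    rw [← lie_skew]
    exact H.neg_mem (hy h hh (by rw [LieEquiv.map_lie, hfix h hh, hgy]))
  have hHZ : ∀ h ∈ H, h ∈ LieModule.genWeightSpace L (0 : H → ℂ) :=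
    fun h hh => toLieSubmodule_le_rootSpace_zero ℂ L H hh
  -- Step 1
  have nondegH : ∀ h ∈ H, (∀ h' ∈ H, killingForm ℂ L h h' = 0) → h = 0 := by
    intro h hh hp
    refine perp_of_perp_zero H h (hHZ h hh) fun y hy => ?_
    rw [← avg_map G N hN 1 one_ne_zero (killingForm ℂ L h) ?_ y]
    · apply hp
      apply hZH
      · exact avg_mem G N 1 y (LieModule.genWeightSpace L (0 : H → ℂ)).toSubmodule hZG hy
      · have := avg_eigen G N hG 1 (by simp) one_ne_zero y
        rw [one_smul] at this
        exact this
    · intro w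
      rw [one_smul, hGg]
      conv_lhs => rw [← hfix h hh]
      exact killingForm_of_equiv_apply g h w
  have habel : ∀ h ∈ H, ∀ h' ∈ H, ⁅h, h'⁆ = 0 := by
    have : IsLieAbelian H := by
      apply LieModule.isLieAbelian_of_ker_traceForm_eq_bot ℂ H L
      rw [eq_bot_iff]
      rintro ⟨h, hh⟩ hker
      rw [LinearMap.mem_ker] at hker
      have : h = 0 := nondegH h hh fun h' hh' => LinearMap.congr_fun hker ⟨h', hh'⟩
      exact (Submodule.mem_bot ℂ).2 (Subtype.ext this)
    intro h hh h' hh'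
    have := this.trivial ⟨h, hh⟩ ⟨h', hh'⟩
    simpa using congrArg Subtype.val this
  -- Step 3
  have hPH : ∀ h ∈ H, ∀ y : L, ⁅h, ⁅h, y⁆⁆ = 0 → ⁅h, y⁆ = 0 := by
    intro h hh
    obtain ⟨n, hnil, hcomm, hP, hgn⟩ := jordan h
    have hn0 : ∀ h' ∈ H, ⁅n, h'⁆ = 0 := fun h' hh' => hcomm _ (habel h hh h' hh')
    have hnH : n ∈ H := by
      refine hself n ?_ fun h' hh' => by rw [hn0 h' hh']; exact H.zero_mem
      simpa using hgn g 1 (by simpa using hfix h hh)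
    have : n = 0 := nondegH n hnH fun h' hh' => killing_nil hnil (hn0 h' hh')
    simpa [this] using hP
  refine ⟨hPH, habel, ?_⟩
  -- the centralizer
  let C : LieSubalgebra ℂ L := lieSetCentralizer (H : Set L)
  have hCdef : ∀ x, x ∈ C ↔ ∀ h ∈ H, ⁅x, h⁆ = 0 := fun _ => Iff.rfl
  have hCG : ∀ x ∈ C, G x ∈ C := by
    intro x hx h hh
    have := congrArg g (hx h hh)
    rw [LieEquiv.map_lie, hfix h hh] at this
    rw [hGg, this]; exact G.map_zero
  have hCfix : ∀ x ∈ C, g x = x → x ∈ H := fun x hx hgx =>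
    hself x hgx fun h hh => by rw [hx h hh]; exact H.zero_mem
  have hZC : ∀ y ∈ LieModule.genWeightSpace L (0 : H → ℂ), y ∈ C := by
    refine zero_ind H _ C.zero_mem ?_
    intro y hy h hh
    rw [← lie_skew, hPH h hh y, neg_zero]
    rw [← lie_skew, hy h hh h hh, neg_zero]
  have hCZ : ∀ y ∈ C, y ∈ LieModule.genWeightSpace L (0 : H → ℂ) := by
    intro y hy
    rw [← LieModule.genWeightSpace_zero_normalizer_eq_self, LieSubmodule.mem_normalizer]
    intro h
    have : ⁅h, y⁆ = 0 := by
      change ⁅(h : L), y⁆ = 0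
      rw [← lie_skew, hy h h.2, neg_zero]
    rw [this]; exact Submodule.zero_mem _
  have nondegC : ∀ x ∈ C, (∀ y ∈ C, killingForm ℂ L x y = 0) → x = 0 := fun x hx h =>
    perp_of_perp_zero H x (hCZ x hx) fun y hy => h y (hZC y hy)
  -- Step 5
  have step5 : ∀ x ∈ C, ∀ y ∈ C, ∀ c : ℂ, c ≠ 0 → g x = c • x → g y = c⁻¹ • y → ⁅x, y⁆ = 0 := by
    intro x hx y hy c hc hgx hgy
    have hxy : ⁅x, y⁆ ∈ H := by
      refine hCfix _ (C.lie_mem hx hy) ?_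
      rw [LieEquiv.map_lie, hgx, hgy, smul_lie, lie_smul, smul_smul, mul_inv_cancel₀ hc, one_smul]
    refine nondegH _ hxy fun h hh => ?_
    rw [LieModule.traceForm_comm, ← LieModule.traceForm_apply_lie_apply, ← lie_skew, hx h hh]
    simp
  -- Step 6
  have step6 : ∀ x ∈ C, ∀ c : ℂ, c ^ N = 1 → g x = c • x →
      ∀ y : L, ⁅x, ⁅x, y⁆⁆ = 0 → ⁅x, y⁆ = 0 := by
    intro x hx c hc hgx
    have hc0 : c ≠ 0 := by rintro rfl; simp [hN.ne'] at hc
    obtain ⟨n, hnil, hcomm, hP, hgn⟩ := jordan x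
    have hnC : n ∈ C := fun h hh => hcomm _ (hx h hh)
    replace hgn := hgn g c hgx
    have : n = 0 := by
      refine nondegC n hnC fun y hy => ?_
      rw [← avg_map G N hN c⁻¹ (inv_ne_zero hc0) (killingForm ℂ L n) ?_ y]
      · apply killing_nil hnil
        refine step5 n hnC _ ?_ c hc0 hgn
          (avg_eigen G N hG c⁻¹ (by rw [inv_pow, hc, inv_one]) (inv_ne_zero hc0) y)
        exact avg_mem G N c⁻¹ y C.toSubmodule hCG hy
      · intro w
        have := killingForm_of_equiv_apply g n w
        rw [hgn, map_smul, LinearMap.smul_apply] at this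
        rw [← this, smul_smul, inv_mul_cancel₀ hc0, one_smul]
        rfl
    simpa [this] using hP
  -- iterated brackets
  have iter : ∀ z ∈ C, ∀ x ∈ C, ∀ a b : ℂ, g z = a • z → g x = b • x → ∀ l : ℕ,
      (fun w => ⁅z, w⁆)^[l] x ∈ C ∧
      g ((fun w => ⁅z, w⁆)^[l] x) = (a ^ l * b) • (fun w => ⁅z, w⁆)^[l] x := by
    intro z hz x hx a b hgz hgx l
    induction l with
    | zero => simpa using ⟨hx, hgx⟩
    | succ l ih =>
      rw [Function.iterate_succ_apply']
      refine ⟨C.lie_mem hz ih.1, ?_⟩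
      rw [LieEquiv.map_lie, ih.2, hgz, smul_lie, lie_smul, smul_smul, pow_succ', mul_assoc]
  -- Step seven, first part
  have step7a : ∀ z ∈ C, ∀ x ∈ C, ∀ (c : ℂ) (m : ℕ), c ^ N = 1 → g z = c • z → g x = c ^ m • x →
      ⁅z, x⁆ = 0 := by
    intro z hz x hx c m hc hgz hgx
    have h1 := iter z hz x hx c (c ^ m) hgz hgx ((N - 1) * m)
    have h2 : c ^ ((N - 1) * m) * c ^ m = 1 := by
      rw [← pow_add]
      have : (N - 1) * m + m = N * m := by
        obtain ⟨M, rfl⟩ := Nat.exists_eq_succ_of_ne_zero hN.ne'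
        simp; ring
      rw [this, pow_mul, hc, one_pow]
    rw [h2, one_smul] at h1
    have h3 := hz _ (hCfix _ h1.1 h1.2)
    refine pow_of_P (step6 z hz c hc hgz) ((N - 1) * m) x ?_
    rw [← Function.iterate_succ_apply (fun w => ⁅z, w⁆), Function.iterate_succ_apply']
    exact h3
  obtain ⟨ζ, hζ⟩ : ∃ ζ : ℂ, IsPrimitiveRoot ζ N := ⟨_, Complex.isPrimitiveRoot_exp N hN.ne'⟩
  have step7b : ∀ x ∈ C, ∀ y ∈ C, ∀ i j : ℕ, g x = ζ ^ j • x → g y = ζ ^ i • y → ⁅x, y⁆ = 0 := by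
    intro x hx y hy i j hgx hgy
    have hpow : ∀ j, (ζ ^ j) ^ N = 1 := fun j => by
      rw [← pow_mul, mul_comm, pow_mul, hζ.pow_eq_one, one_pow]
    obtain ⟨k, m, hkm⟩ := nt N hN i j
    have h1 := iter x hx y hy _ _ hgx hgy k
    have h2 : (ζ ^ j) ^ k * ζ ^ i = ζ ^ (i + k * j) := by
      rw [← pow_mul, ← pow_add]; congr 1; ring
    rw [h2] at h1
    have h3 : (ζ ^ (i + k * j)) ^ m = ζ ^ j := by
      have hmod : ∀ t : ℕ, ζ ^ t = ζ ^ (t % N) := by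
        intro t
        conv_lhs => rw [← Nat.mod_add_div t N, pow_add, pow_mul, hζ.pow_eq_one, one_pow, mul_one]
      rw [← pow_mul, hmod, hkm, ← hmod]
    have h4 := step7a _ h1.1 x hx _ m (hpow _) h1.2 (by rw [h3]; exact hgx)
    refine pow_of_P (step6 x hx _ (hpow j) hgx) k y ?_
    rw [← Function.iterate_succ_apply (fun w => ⁅x, w⁆), Function.iterate_succ_apply', ← lie_skew,
      h4, neg_zero]
  -- Step 8
  intro x y hx hy
  have hζ0 : ζ ≠ 0 := hζ.ne_zero hN.ne'
  have hpow : ∀ j, (ζ ^ j) ^ N = 1 := fun j => by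
    rw [← pow_mul, mul_comm, pow_mul, hζ.pow_eq_one, one_pow]
  have hx' := sum_avg G N hN ζ hζ x
  have hy' := sum_avg G N hN ζ hζ y
  have key : ⁅∑ j ∈ Finset.range N, avg G N (ζ ^ j) x, ∑ j ∈ Finset.range N, avg G N (ζ ^ j) y⁆
      = 0 := by
    rw [sum_lie_sum]
    refine Finset.sum_eq_zero fun j _ => Finset.sum_eq_zero fun i _ => ?_
    refine step7b _ (avg_mem G N _ x C.toSubmodule hCG hx) _ (avg_mem G N _ y C.toSubmodule hCG hy)
      _ _ (avg_eigen G N hG _ (hpow _) (pow_ne_zero _ hζ0) x)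
      (avg_eigen G N hG _ (hpow _) (pow_ne_zero _ hζ0) y)
  rwa [hx', hy'] at key

end core
end

section transfer

variable {L Q : Type*} [LieRing L] [LieAlgebra ℂ L] [FiniteDimensional ℂ L]
  [LieRing Q] [LieAlgebra ℂ Q] [FiniteDimensional ℂ Q]

lemma central_bracket [IsKilling ℂ Q] (π : L →ₗ⁅ℂ⁆ Q) (s : Q →ₗ[ℂ] L) (hs : ∀ q, π (s q) = q)
    (hker : ∀ x, π x = 0 → ∀ y : L, ⁅x, y⁆ = 0) (x y : L) (h : π ⁅x, y⁆ = 0) : ⁅x, y⁆ = 0 := by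
  have hl : ∀ x x' y : L, π x = π x' → ⁅x, y⁆ = ⁅x', y⁆ := by
    intro x x' y hx
    rw [← sub_eq_zero, ← sub_lie]
    exact hker _ (by rw [map_sub, hx, sub_self]) y
  have hr : ∀ x y y' : L, π y = π y' → ⁅x, y⁆ = ⁅x, y'⁆ := by
    intro x y y' hy
    rw [← lie_skew, hl y y' x hy, lie_skew]
  by_contra hne
  obtain ⟨f, hf⟩ : ∃ f : Module.Dual ℂ L, f ⁅x, y⁆ ≠ 0 := by
    by_contra hcon
    push Not at hcon
    exact hne ((Module.forall_dual_apply_eq_zero_iff ℂ _).1 hcon)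
  apply hf
  let ω : Q →ₗ[ℂ] Q →ₗ[ℂ] ℂ := LinearMap.mk₂ ℂ (fun a b => f ⁅s a, s b⁆)
    (by intros; simp) (by intros; simp) (by intros; simp) (by intros; simp)
  have hω : ∀ a b, ω a b = f ⁅s a, s b⁆ := fun _ _ => rfl
  have hnd := IsKilling.killingForm_nondegenerate ℂ Q
  let e := LinearMap.BilinForm.toDual (killingForm ℂ Q) hnd
  let D : Q →ₗ[ℂ] Q := e.symm.toLinearMap ∘ₗ ω
  have hD : ∀ a b, killingForm ℂ Q (D a) b = f ⁅s a, s b⁆ := by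
    intro a b
    have := LinearMap.BilinForm.apply_toDual_symm_apply (hB := hnd) (ω a) b
    exact this
  have hmove : ∀ a b c : Q, killingForm ℂ Q ⁅a, b⁆ c = - killingForm ℂ Q b ⁅a, c⁆ := by
    intro a b c
    rw [← lie_skew, map_neg, LinearMap.neg_apply, LieModule.traceForm_apply_lie_apply]
  have hder : ∀ a b, D ⁅a, b⁆ = ⁅a, D b⁆ - ⁅b, D a⁆ := by
    intro a b
    apply e.injective
    ext c
    change killingForm ℂ Q (D ⁅a, b⁆) c = killingForm ℂ Q (⁅a, D b⁆ - ⁅b, D a⁆) c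
    rw [map_sub, LinearMap.sub_apply, hmove, hmove, hD, hD, hD,
      hl (s ⁅a, b⁆) ⁅s a, s b⁆ _ (by simp [hs]),
      hr _ (s ⁅a, c⁆) ⁅s a, s c⁆ (by simp [hs]), hr _ (s ⁅b, c⁆) ⁅s b, s c⁆ (by simp [hs]),
      lie_lie, map_sub]
    ring
  obtain ⟨u, hu⟩ := LieDerivation.IsKilling.exists_eq_ad (⟨D, hder⟩ : LieDerivation ℂ Q Q)
  have hu' : ∀ a, D a = ⁅u, a⁆ := by
    intro a
    have := congrArg (fun d : LieDerivation ℂ Q Q => d a) hu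
    simpa using this.symm
  have h1 := hD (π x) (π y)
  rw [hl _ x _ (hs _), hr _ _ y (hs _), hu', LieModule.traceForm_apply_lie_apply, ← LieHom.map_lie,
    h, map_zero] at h1
  exact h1.symm


/-- An automorphism descends along a surjection whose kernel it preserves. -/
lemma exists_descend (π : L →ₗ⁅ℂ⁆ Q) (s : Q →ₗ[ℂ] L) (hs : ∀ q, π (s q) = q)
    (hker : ∀ x, π x = 0 ↔ ∀ y : L, ⁅x, y⁆ = 0) (g : L ≃ₗ⁅ℂ⁆ L) :
    ∃ g' : Q ≃ₗ⁅ℂ⁆ Q, ∀ x, g' (π x) = π (g x) := by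
  have hpres : ∀ (g : L ≃ₗ⁅ℂ⁆ L) (x x' : L), π x = π x' → π (g x) = π (g x') := by
    intro g x x' h
    have h0 : π (x - x') = 0 := by rw [map_sub, h, sub_self]
    have h1 : π ((g : L →ₗ⁅ℂ⁆ L) (x - x')) = 0 := by
      rw [hker] at h0 ⊢
      intro y
      have := congrArg (g : L →ₗ⁅ℂ⁆ L) (h0 (g.symm y))
      rw [LieHom.map_lie, map_zero] at this
      simpa using this
    rw [map_sub, map_sub, sub_eq_zero] at h1
    exact h1
  let F : (L ≃ₗ⁅ℂ⁆ L) → (Q →ₗ[ℂ] Q) := fun g =>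
    (π : L →ₗ[ℂ] Q) ∘ₗ ((g : L →ₗ⁅ℂ⁆ L) : L →ₗ[ℂ] L) ∘ₗ s
  have hF : ∀ g x, F g (π x) = π (g x) := fun g x => hpres g _ _ (hs _)
  let e : Q ≃ₗ⁅ℂ⁆ Q :=
    { F g with
      map_lie' := by
        intro a b
        change F g ⁅a, b⁆ = ⁅F g a, F g b⁆
        rw [← hs a, ← hs b, ← LieHom.map_lie, hF, hF, hF, LieEquiv.map_lie, LieHom.map_lie]
      invFun := F g.symm
      left_inv := by
        intro a
        change F g.symm (F g a) = a
        rw [← hs a, hF, hF]; simp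
      right_inv := by
        intro a
        change F g (F g.symm a) = a
        rw [← hs a, hF, hF]; simp }
  exact ⟨e, hF g⟩

theorem transfer [IsKilling ℂ Q] (π : L →ₗ⁅ℂ⁆ Q) (s : Q →ₗ[ℂ] L) (hs : ∀ q, π (s q) = q)
    (hker : ∀ x, π x = 0 ↔ ∀ y : L, ⁅x, y⁆ = 0) (g : L ≃ₗ⁅ℂ⁆ L)
    (n : ℕ) (hn : 0 < n) (hg : ∀ x, (⇑g)^[n] x = x)
    (H : LieSubalgebra ℂ L) [LieRing.IsNilpotent H] (hfix : ∀ h ∈ H, g h = h)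
    (hself : ∀ x, g x = x → (∀ h ∈ H, ⁅x, h⁆ ∈ H) → x ∈ H) :
    (lieSetCentralizer (H : Set L)).IsCartanSubalgebra := by
  have hcb := central_bracket π s hs (fun x => (hker x).1)
  obtain ⟨g', hg'⟩ := exists_descend π s hs hker g
  let G : L →ₗ[ℂ] L := (g : L →ₗ⁅ℂ⁆ L)
  have hG : ∀ x, (⇑G)^[n] x = x := hg
  have hgk : ∀ k x, (⇑g')^[k] (π x) = π ((⇑g)^[k] x) := by
    intro k x
    induction k with
    | zero => rfl
    | succ k ih => rw [Function.iterate_succ_apply', ih, hg', Function.iterate_succ_apply']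
  have hgn : ∀ q, (⇑g')^[n] q = q := by
    intro q
    rw [← hs q, hgk, hg]
  have hnil : LieRing.IsNilpotent (H.map π) := by
    let f : H →ₗ⁅ℂ⁆ (H.map π) :=
      { toFun := fun h => ⟨π h, ⟨h, h.2, rfl⟩⟩
        map_add' := by intro a b; ext; simp
        map_smul' := by intro a b; ext; simp
        map_lie' := by intro a b; ext; simp }
    have hf : Function.Surjective f := by
      rintro ⟨q, h, hh, rfl⟩
      exact ⟨⟨h, hh⟩, rfl⟩
    exact hf.lieAlgebra_isNilpotent
  have hfix' : ∀ h ∈ H.map π, g' h = h := by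
    rintro q ⟨h, hh, rfl⟩
    change g' (π h) = π h
    rw [hg', hfix h hh]
  have hself' : ∀ x, g' x = x → (∀ h ∈ H.map π, ⁅x, h⁆ ∈ H.map π) → x ∈ H.map π := by
    intro q hq hqH
    -- a fixed lift
    obtain ⟨x, hgx, hx⟩ : ∃ x, g x = x ∧ π x = q := by
      refine ⟨avg G n 1 (s q), ?_, ?_⟩
      · have := avg_eigen G n hG 1 (by simp) one_ne_zero (s q)
        rw [one_smul] at this
        exact this
      · have h1 : ∀ k, π ((⇑G)^[k] (s q)) = q := by
          intro k
          have h2 := hgk k (s q)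
          rw [hs] at h2
          have h3 : (⇑g')^[k] q = q := Function.iterate_fixed hq k
          rw [h3] at h2
          exact h2.symm
        unfold avg
        rw [map_smul, map_sum]
        simp only [inv_one, one_pow, one_smul, h1, Finset.sum_const, Finset.card_range]
        rw [← Nat.cast_smul_eq_nsmul ℂ, smul_smul, inv_mul_cancel₀ (by exact_mod_cast hn.ne'),
          one_smul]
    refine ⟨x, ?_, hx⟩
    refine hself x hgx fun h hh => ?_
    obtain ⟨h', hh', he⟩ := hqH (π h) ⟨h, hh, rfl⟩
    have he' : π h' = π ⁅x, h⁆ := by rw [LieHom.map_lie, hx]; exact he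
    have hz : ⁅x, h⁆ - h' ∈ H := by
      have h0 : π (⁅x, h⁆ - h') = 0 := by rw [map_sub, he', sub_self]
      refine hself _ ?_ ?_
      · have : G (⁅x, h⁆ - h') = ⁅x, h⁆ - h' := by
          rw [map_sub]
          change g ⁅x, h⁆ - g h' = _
          rw [LieEquiv.map_lie, hgx, hfix h hh, hfix h' hh']
        exact this
      · intro y _
        rw [(hker _).1 h0 y]; exact H.zero_mem
    have := H.add_mem hz hh'
    rwa [sub_add_cancel] at this
  obtain ⟨hP, hab, hC⟩ := core g' n hn hgn (H.map π) hfix' hself'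
  have hHab : ∀ h ∈ H, ∀ h' ∈ H, ⁅h, h'⁆ = 0 := by
    intro h hh h' hh'
    apply hcb
    rw [LieHom.map_lie]
    exact hab _ ⟨h, hh, rfl⟩ _ ⟨h', hh', rfl⟩
  have hCab : ∀ x ∈ lieSetCentralizer (H : Set L), ∀ y ∈ lieSetCentralizer (H : Set L),
      ⁅x, y⁆ = 0 := by
    have hlift : ∀ x ∈ lieSetCentralizer (H : Set L), ∀ h ∈ H.map π, ⁅π x, h⁆ = 0 := by
      rintro x hx q ⟨h, hh, rfl⟩
      change ⁅π x, π h⁆ = 0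
      rw [← LieHom.map_lie, hx h hh, map_zero]
    intro x hx y hy
    apply hcb
    rw [LieHom.map_lie]
    exact hC _ _ (hlift x hx) (hlift y hy)
  have habel : IsLieAbelian (lieSetCentralizer (H : Set L)) :=
    ⟨fun x y => Subtype.ext (hCab x x.2 y y.2)⟩
  refine { nilpotent := inferInstance, self_normalizing := ?_ }
  refine le_antisymm ?_ (LieSubalgebra.le_normalizer _)
  intro z hz
  rw [LieSubalgebra.mem_normalizer_iff] at hz
  intro h hh
  apply hcb
  have h1 : ⁅z, h⁆ ∈ lieSetCentralizer (H : Set L) := hz h (fun h' hh' => hHab h hh h' hh')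
  have h2 := h1 h hh
  have h3 : ⁅π h, ⁅π h, π z⁆⁆ = 0 := by
    rw [← LieHom.map_lie, ← LieHom.map_lie, ← lie_skew h ⁅h, z⁆, ← neg_lie, lie_skew, h2, map_zero]
  have h4 := hP (π h) ⟨h, hh, rfl⟩ _ h3
  rw [LieHom.map_lie, ← lie_skew, h4, neg_zero]

lemma killing_quotient (hred : LieAlgebra.IsReductive ℂ L) :
    IsKilling ℂ (L ⧸ LieAlgebra.center ℂ L) := by
  have : HasTrivialRadical ℂ (L ⧸ LieAlgebra.center ℂ L) := by
    rw [LieAlgebra.hasTrivialRadical_iff_no_abelian_ideals]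
    intro I hI
    let J : LieIdeal ℂ L :=
      { carrier := {x | (LieSubmodule.Quotient.mk x : L ⧸ LieAlgebra.center ℂ L) ∈ I}
        add_mem' := fun ha hb => I.add_mem ha hb
        zero_mem' := I.zero_mem
        smul_mem' := fun c x hx => I.smul_mem c hx
        lie_mem := by
          intro x m hm
          change (LieSubmodule.Quotient.mk ⁅x, m⁆ : L ⧸ LieAlgebra.center ℂ L) ∈ I
          rw [LieSubmodule.Quotient.mk_bracket]
          exact I.lie_mem hm }
    have hJJ : ∀ x ∈ J, ∀ y ∈ J, ⁅x, y⁆ ∈ LieAlgebra.center ℂ L := by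
      intro x hx y hy
      rw [← LieSubmodule.Quotient.mk_eq_zero', LieSubmodule.Quotient.mk_bracket]
      exact congrArg Subtype.val (hI.trivial ⟨_, hx⟩ ⟨_, hy⟩)
    have hle : J ≤ LieAlgebra.center ℂ L := by
      rw [← hred, ← LieIdeal.solvable_iff_le_radical]
      rw [LieAlgebra.isSolvable_iff ℂ]
      refine ⟨2, ?_⟩
      have h1 : derivedSeries ℂ J 1 ≤ LieAlgebra.center ℂ J := by
        rw [derivedSeries_def, derivedSeriesOfIdeal_succ, derivedSeriesOfIdeal_zero,
          LieSubmodule.lieIdeal_oper_eq_span, LieSubmodule.lieSpan_le]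
        rintro _ ⟨⟨x, _⟩, ⟨y, _⟩, rfl⟩
        intro z
        have := hJJ x x.2 y y.2 z
        exact Subtype.ext this
      rw [derivedSeries_def, derivedSeriesOfIdeal_succ, LieSubmodule.lie_eq_bot_iff]
      intro x hx y hy
      exact h1 hy x
    rw [eq_bot_iff]
    intro q hq
    obtain ⟨x, rfl⟩ := LieSubmodule.Quotient.surjective_mk' (LieAlgebra.center ℂ L) q
    have : x ∈ LieAlgebra.center ℂ L := hle hq
    rw [LieSubmodule.mem_bot]
    exact (LieSubmodule.Quotient.mk_eq_zero _).2 this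
  infer_instance

end transfer

end FixCartan

/-- Let `L` be a finite-dimensional reductive complex Lie algebra, `g` an
automorphism of `L` of finite order `n`, `L^g` its fixed-point subalgebra, and `H₀` a Cartan
subalgebra of `L^g`.  Then the centralizer `C_L(H₀)` is a Cartan subalgebra of `L`. -/
theorem centralizer_of_cartan_of_fixedSubalgebra_isCartanSubalgebra
    [FiniteDimensional ℂ L] (hred : LieAlgebra.IsReductive ℂ L)
    (g : L ≃ₗ⁅ℂ⁆ L) (n : ℕ) (hn : 0 < n) (hg : ∀ x, (⇑g)^[n] x = x)
    (H₀ : LieSubalgebra ℂ g.fixedSubalgebra) (hH₀ : H₀.IsCartanSubalgebra) :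
    (lieSetCentralizer ((H₀.map g.fixedSubalgebra.incl : LieSubalgebra ℂ L) :
      Set L)).IsCartanSubalgebra := by
  have hK := FixCartan.killing_quotient hred
  let π : L →ₗ⁅ℂ⁆ (L ⧸ LieAlgebra.center ℂ L) :=
    { (LieSubmodule.Quotient.mk' (LieAlgebra.center ℂ L) : L →ₗ[ℂ] _) with
      map_lie' := fun {x y} => LieSubmodule.Quotient.mk_bracket _ x y }
  have hπ : Function.Surjective π := LieSubmodule.Quotient.surjective_mk' (LieAlgebra.center ℂ L)
  let πl : L →ₗ[ℂ] (L ⧸ LieAlgebra.center ℂ L) := π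
  obtain ⟨s, hs⟩ := LinearMap.exists_rightInverse_of_surjective πl (LinearMap.range_eq_top.2 hπ)
  have hker : ∀ x, π x = 0 ↔ ∀ y : L, ⁅x, y⁆ = 0 := by
    intro x
    have h1 : π x = 0 ↔ x ∈ LieAlgebra.center ℂ L :=
      LieSubmodule.Quotient.mk_eq_zero _
    rw [h1, LieModule.mem_maxTrivSubmodule]
    refine forall_congr' fun y => ?_
    rw [← lie_skew, neg_eq_zero]
  have hnil0 := hH₀.nilpotent
  have hnil : LieRing.IsNilpotent (H₀.map g.fixedSubalgebra.incl) := by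
    let f : H₀ →ₗ⁅ℂ⁆ (H₀.map g.fixedSubalgebra.incl) :=
      { toFun := fun h => ⟨g.fixedSubalgebra.incl h, ⟨h, h.2, rfl⟩⟩
        map_add' := by intro a b; ext; simp
        map_smul' := by intro a b; ext; simp
        map_lie' := by intro a b; ext; simp }
    have hf : Function.Surjective f := by
      rintro ⟨q, h, hh, rfl⟩
      exact ⟨⟨h, hh⟩, rfl⟩
    exact hf.lieAlgebra_isNilpotent
  refine FixCartan.transfer π s (fun q => LinearMap.congr_fun hs q) hker g n hn hg
    (H₀.map g.fixedSubalgebra.incl) ?_ ?_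
  · rintro _ ⟨h, hh, rfl⟩
    exact h.2
  · intro x hx hxH
    have : (⟨x, hx⟩ : g.fixedSubalgebra) ∈ H₀ := by
      rw [← hH₀.self_normalizing, LieSubalgebra.mem_normalizer_iff]
      intro h hh
      obtain ⟨h', hh', he⟩ := hxH h ⟨h, hh, rfl⟩
      have : h' = ⁅(⟨x, hx⟩ : g.fixedSubalgebra), h⁆ := Subtype.ext he
      rw [← this]; exact hh'
    exact ⟨_, this, rfl⟩
end

section
/- Let 𝔤 be a finite-dimensional reductive complex Lie algebra, let g be an automorphism of 𝔤 of finite order, let 𝓗 be a Cartan subalgebra of 𝔤, and let 𝓗₀ be any Cartan subalgebra of the fixed-point subalgebra 𝔤^g. Then dim(𝓗^g) ≤ dim(𝓗₀), and equality dim(𝓗^g) = dim(𝓗₀) holds if and only if 𝓗^g is itself a Cartan subalgebra of 𝔤^g. -/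
variable {L : Type*} [LieRing L] [LieAlgebra ℂ L]

namespace FixedCartan
open NormedSpace Topology Filter

section analytic
variable {E : Type*} [NormedAddCommGroup E] [NormedSpace ℂ E] [FiniteDimensional ℂ E]

lemma exp_mul_neg (D : E →L[ℂ] E) : exp D * exp (-D) = 1 := by
  have : CompleteSpace E := FiniteDimensional.complete ℂ E
  let _ : NormedAlgebra ℚ (E →L[ℂ] E) := NormedAlgebra.restrictScalars ℚ ℂ _
  rw [← exp_add_of_commute (Commute.refl D).neg_right]; simp

lemma exp_conj_bracket (B : E →L[ℂ] E →L[ℂ] E)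
    (hB : ∀ u y, B (B u y) = B u * B y - B y * B u) (u y : E) :
    B (exp (B u) y) = exp (B u) * B y * exp (-(B u)) := by
  have : CompleteSpace E := FiniteDimensional.complete ℂ E
  set D := B u with hD
  let f : ℂ → (E →L[ℂ] E) := fun t => exp (t • (-D)) * B (exp (t • D) y) * exp (t • D)
  have hf : ∀ t, HasDerivAt f 0 t := by
    intro t
    have h1 := hasDerivAt_exp_smul_const (𝕂 := ℂ) (-D) t
    have h2 := hasDerivAt_exp_smul_const' (𝕂 := ℂ) D t
    have h3 : HasDerivAt (fun t : ℂ => B (exp (t • D) y)) (B ((D * exp (t • D)) y)) t := by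
      have h4 : HasDerivAt (fun t : ℂ => exp (t • D) y) ((D * exp (t • D)) y) t :=
        ((ContinuousLinearMap.apply ℂ E y).hasFDerivAt.comp_hasDerivAt t h2)
      exact B.hasFDerivAt.comp_hasDerivAt t h4
    have h := (h1.mul h3).mul h2
    have h5 : B ((D * exp (t • D)) y) = D * B (exp (t • D) y) - B (exp (t • D) y) * D := by
      rw [mul_apply_eq_comp, hD, hB]
    have h6 : (exp (t • -D) * -D * B ((exp (t • D)) y) +
        exp (t • -D) * B ((D * exp (t • D)) y)) * exp (t • D) +
        (exp (t • -D) * B ((exp (t • D)) y)) * (D * exp (t • D)) = 0 := by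
      rw [h5]
      noncomm_ring
    rw [← h6]
    exact h
  have hconst := is_const_of_deriv_eq_zero (𝕜 := ℂ) (f := f) (fun t => (hf t).differentiableAt)
    (fun t => (hf t).deriv) 1 0
  have h0 : f 0 = B y := by simp [f]
  have h1 : f 1 = exp (-D) * B (exp D y) * exp D := by simp [f]
  rw [h0, h1] at hconst
  rw [← hconst]
  have hc : exp D * exp (-D) = 1 := exp_mul_neg D
  calc B (exp D y) = (exp D * exp (-D)) * B (exp D y) * (exp D * exp (-D)) := by rw [hc]; simp
    _ = _ := by noncomm_ring

lemma eventually_conj (B : E →L[ℂ] E →L[ℂ] E)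
    (hB : ∀ u y, B (B u y) = B u * B y - B y * B u) (hs : ∀ u y, B u y = - B y u) (x : E)
    (S : Submodule ℂ E) (hS : S ⊔ (B x : E →ₗ[ℂ] E).range = ⊤) :
    ∀ᶠ y in 𝓝 x, ∃ h ∈ S, ∃ e : E ≃ₗ[ℂ] E,
      (B y : E →ₗ[ℂ] E) = e.conj (B (x + h) : E →ₗ[ℂ] E) := by
  have : CompleteSpace E := FiniteDimensional.complete ℂ E
  have : CompleteSpace S := FiniteDimensional.complete ℂ S
  let Φ : S × E → E := fun p => exp (B p.2) (x + p.1)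
  let Φ' : S × E →L[ℂ] E :=
    S.subtypeL.comp (ContinuousLinearMap.fst ℂ S E) +
      (ContinuousLinearMap.apply ℂ E x).comp (B.comp (ContinuousLinearMap.snd ℂ S E))
  have hΦ : HasStrictFDerivAt Φ Φ' 0 := by
    have h1 : HasStrictFDerivAt (fun p : S × E => exp (B p.2))
        (B.comp (ContinuousLinearMap.snd ℂ S E)) 0 := by
      have ha : HasStrictFDerivAt (fun p : S × E => B p.2)
        (B.comp (ContinuousLinearMap.snd ℂ S E)) 0 :=
        (B.comp (ContinuousLinearMap.snd ℂ S E)).hasStrictFDerivAt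
      have hb : HasStrictFDerivAt (exp : (E →L[ℂ] E) → (E →L[ℂ] E)) (1 : (E →L[ℂ] E) →L[ℂ] _)
          ((fun p : S × E => B p.2) 0) := by
        simpa using hasStrictFDerivAt_exp_zero (𝕂 := ℂ) (𝔸 := E →L[ℂ] E)
      exact HasStrictFDerivAt.comp (f := fun p : S × E => B p.2) 0 hb ha
    have h2 : HasStrictFDerivAt (fun p : S × E => x + (p.1 : E))
        (S.subtypeL.comp (ContinuousLinearMap.fst ℂ S E)) 0 :=
      (S.subtypeL.comp (ContinuousLinearMap.fst ℂ S E)).hasStrictFDerivAt.const_add x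
    have h3 := h1.clm_apply h2
    have h4 : Φ' = (exp (B (0 : S × E).2)).comp
        (S.subtypeL.comp (ContinuousLinearMap.fst ℂ S E)) +
        (B.comp (ContinuousLinearMap.snd ℂ S E)).flip (x + ((0 : S × E).1 : E)) := by
      ext p <;> simp [Φ']
    rw [h4]
    exact h3
  have hsurj : Φ'.range = ⊤ := by
    rw [eq_top_iff, ← hS, sup_le_iff]
    constructor
    · intro h hh
      exact ⟨(⟨h, hh⟩, 0), by simp [Φ']⟩
    · rintro _ ⟨u, rfl⟩
      refine ⟨(0, -u), ?_⟩
      simp [Φ', hs x u]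
  have hmap := hΦ.map_nhds_eq_of_surj hsurj
  have h0 : Φ 0 = x := by simp [Φ]
  rw [h0] at hmap
  rw [← hmap, eventually_map]
  refine Eventually.of_forall fun p => ⟨p.1, p.1.2, ?_⟩
  have hc : exp (B p.2) * exp (-(B p.2)) = 1 := exp_mul_neg _
  have hc' : exp (-(B p.2)) * exp (B p.2) = 1 := by
    simpa using exp_mul_neg (-(B p.2))
  refine ⟨LinearEquiv.ofLinearMap (exp (B p.2) : E →L[ℂ] E) (exp (-(B p.2)) : E →L[ℂ] E) ?_ ?_, ?_⟩
  · ext v; exact DFunLike.congr_fun hc v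
  · ext v; exact DFunLike.congr_fun hc' v
  · ext v
    have := exp_conj_bracket B hB p.2 (x + p.1)
    exact DFunLike.congr_fun this v

lemma exists_eval_ne_zero {ι : Type*} [Fintype ι] (b : Module.Basis ι ℂ E)
    (P : MvPolynomial ι ℂ) (r : E) (hr : MvPolynomial.eval (b.repr r) P ≠ 0)
    (x : E) (U : Set E) (hU : U ∈ 𝓝 x) : ∃ y ∈ U, MvPolynomial.eval (b.repr y) P ≠ 0 := by
  let q : Polynomial ℂ := MvPolynomial.aeval
    (fun i => Polynomial.C (b.repr x i) + Polynomial.X * Polynomial.C (b.repr (r - x) i)) P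
  have hq : ∀ s : ℂ, q.eval s = MvPolynomial.eval (b.repr (x + s • (r - x))) P := by
    intro s
    simp only [q]
    rw [← Polynomial.coe_evalRingHom, MvPolynomial.aeval_def, MvPolynomial.hom_eval₂]
    have : ((Polynomial.evalRingHom s).comp (algebraMap ℂ (Polynomial ℂ))) = RingHom.id ℂ := by
      ext z; simp
    rw [this]
    rw [MvPolynomial.eval, MvPolynomial.coe_eval₂Hom]
    congr 1
    ext i
    simp
  have hq0 : q ≠ 0 := by
    intro h
    have := hq 1
    rw [h] at this
    simp at this
    exact hr this.symm
  have hfin : {s : ℂ | q.IsRoot s}.Finite := Polynomial.finite_setOfPred_isRoot hq0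
  have hcont : Tendsto (fun s : ℂ => x + s • (r - x)) (𝓝 0) (𝓝 x) := by
    have : Continuous (fun s : ℂ => x + s • (r - x)) := by fun_prop
    simpa using this.tendsto 0
  have hinf : {s : ℂ | x + s • (r - x) ∈ U}.Infinite := infinite_of_mem_nhds 0 (hcont hU)
  obtain ⟨s, hs, hs'⟩ := (hinf.sdiff hfin).nonempty
  exact ⟨_, hs, by rw [← hq]; exact hs'⟩

end analytic
section rank
open LieAlgebra LieSubalgebra Module

variable {L : Type*} [LieRing L] [LieAlgebra ℂ L] [FiniteDimensional ℂ L]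

lemma le_engel_of_nilpotent (H : LieSubalgebra ℂ L) [LieRing.IsNilpotent H] (x : L) (hx : x ∈ H) :
    H ≤ engel ℂ x := by
  intro y hy
  have := le_zeroRootSubalgebra ℂ L H hy
  rw [mem_zeroRootSubalgebra] at this
  obtain ⟨k, hk⟩ := this ⟨x, hx⟩
  rw [mem_engel_iff]
  exact ⟨k, hk⟩

lemma exists_eq_engel (H : LieSubalgebra ℂ L) [H.IsCartanSubalgebra] :
    ∃ x ∈ H, H = engel ℂ x := by
  classical
  have hne : ∃ n, ∃ x ∈ H, finrank ℂ (engel ℂ x) = n := ⟨_, 0, H.zero_mem, rfl⟩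
  obtain ⟨x, hx, hxn⟩ := Nat.find_spec hne
  have hmin : ∀ y ∈ H, finrank ℂ (engel ℂ x) ≤ finrank ℂ (engel ℂ y) := by
    intro y hy
    rw [hxn]
    exact Nat.find_min' hne ⟨y, hy, rfl⟩
  refine ⟨x, hx, ?_⟩
  set Ex : {engel ℂ z | z ∈ H} := ⟨engel ℂ x, x, hx, rfl⟩
  have hbot : IsBot Ex := by
    apply engel_isBot_of_isMin ?_ H Ex (le_engel_of_nilpotent H x hx)
    · rintro ⟨_, y, hy, rfl⟩ hyx
      suffices engel ℂ y = engel ℂ x from this.ge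
      apply LieSubalgebra.toSubmodule_injective
      exact Submodule.eq_of_le_of_finrank_le hyx (hmin y hy)
    · exact Cardinal.natCast_le_aleph0.trans <| Cardinal.infinite_iff.mp inferInstance
  apply le_antisymm (le_engel_of_nilpotent H x hx)
  intro y hy
  rw [← zeroRootSubalgebra_eq_of_is_cartan ℂ L H, mem_zeroRootSubalgebra]
  rintro ⟨z, hz⟩
  have h1 : y ∈ engel ℂ z := (@hbot ⟨engel ℂ z, z, hz, rfl⟩ : engel ℂ x ≤ engel ℂ z) hy
  rw [mem_engel_iff] at h1
  exact h1

lemma engel_sup_range (x : L) :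
    (engel ℂ x).toSubmodule ⊔ (ad ℂ L x).range = ⊤ := by
  obtain ⟨k, hk⟩ := Filter.eventually_atTop.mp (ad ℂ L x).eventually_codisjoint_ker_pow_range_pow
  have h := (hk (k + 1) (Nat.le_succ k)).eq_top
  rw [eq_top_iff, ← h]
  apply sup_le_sup
  · intro y hy
    exact (mem_engel_iff ℂ x y).2 ⟨_, hy⟩
  · rintro _ ⟨y, rfl⟩
    rw [pow_succ']
    exact ⟨_, rfl⟩

lemma finrank_cartan_eq_rank (H : LieSubalgebra ℂ L) [H.IsCartanSubalgebra] :
    finrank ℂ H = rank ℂ L := by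
  obtain ⟨x, hx, hHx⟩ := exists_eq_engel H
  apply le_antisymm
  swap
  · rw [hHx]; exact rank_le_finrank_engel ℂ x
  let b := Module.finBasis ℂ L
  let _ : NormedAddCommGroup L := NormedAddCommGroup.induced L (Fin (finrank ℂ L) → ℂ)
    b.equivFun.toLinearMap b.equivFun.injective
  let _ : NormedSpace ℂ L := NormedSpace.induced ℂ L (Fin (finrank ℂ L) → ℂ)
    b.equivFun.toLinearMap
  let B : L →L[ℂ] L →L[ℂ] L := LinearMap.toContinuousLinearMap
    ((LinearMap.toContinuousLinearMap (𝕜 := ℂ) (E := L) (F' := L)).toLinearMap ∘ₗ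
      (LinearMap.mk₂ ℂ (fun u y : L => ⁅u, y⁆) add_lie smul_lie lie_add
        (fun c u y => lie_smul c u y)))
  have hBapp : ∀ u y, B u y = ⁅u, y⁆ := fun u y => rfl
  have hBad : ∀ u, (B u : L →ₗ[ℂ] L) = ad ℂ L u := fun u => rfl
  have hev := eventually_conj B (fun u y => by
      ext z
      simp only [ContinuousLinearMap.sub_apply, mul_apply_eq_comp, hBapp]
      rw [leibniz_lie u y z]; abel)
    (fun u y => by rw [hBapp, hBapp, lie_skew]) x H.toSubmodule (by
      rw [hBad, hHx]; exact engel_sup_range x)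
  obtain ⟨r, hr⟩ := exists_isRegular ℂ L
  rw [isRegular_iff_coeff_polyCharpoly_rank_ne_zero ℂ b] at hr
  obtain ⟨y, ⟨h, hh, e, he⟩, hy⟩ := exists_eval_ne_zero b _ r hr x _ hev
  rw [← isRegular_iff_coeff_polyCharpoly_rank_ne_zero ℂ b, isRegular_def, ← hBad, he, hBad,
    LinearEquiv.charpoly_conj, ← isRegular_def, isRegular_iff_finrank_engel_eq_rank] at hy
  rw [← hy]
  exact Submodule.finrank_mono (le_engel_of_nilpotent H (x + h) (H.add_mem hx hh))

end rank
section reductive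
open LieAlgebra LieSubalgebra Module

variable {L : Type*} [LieRing L] [LieAlgebra ℂ L] [FiniteDimensional ℂ L]

lemma quot_hasTrivialRadical (Z : LieIdeal ℂ L) (hZ : ∀ z ∈ Z, ∀ y : L, ⁅z, y⁆ = 0)
    (hrad : radical ℂ L = Z) : HasTrivialRadical ℂ (L ⧸ Z) := by
  rw [hasTrivialRadical_iff_no_abelian_ideals]
  intro I hI
  let q : L →ₗ[ℂ] (L ⧸ Z) := Z.toSubmodule.mkQ
  have hqs : Function.Surjective q := Submodule.mkQ_surjective _
  have hql : ∀ x y, q ⁅x, y⁆ = ⁅q x, q y⁆ := fun x y => rfl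
  have hq0 : ∀ z, q z = 0 ↔ z ∈ Z := fun z => Submodule.Quotient.mk_eq_zero _
  let J : LieIdeal ℂ L :=
    { Submodule.comap q I.toSubmodule with
      lie_mem := by
        intro x m hm
        change q ⁅x, m⁆ ∈ I
        rw [hql]
        exact lie_mem_right ℂ _ I _ _ hm }
  have hJ : ∀ x, x ∈ J ↔ q x ∈ I := fun x => Iff.rfl
  have h1 : ⁅J, J⁆ ≤ Z := by
    rw [LieSubmodule.lie_le_iff]
    intro x hx y hy
    rw [← hq0, hql]
    have := hI.trivial ⟨q x, hx⟩ ⟨q y, hy⟩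
    exact congrArg Subtype.val this
  have h2 : ⁅⁅J, J⁆, ⁅J, J⁆⁆ ≤ ⊥ := by
    rw [LieSubmodule.lie_le_iff]
    intro x hx y hy
    rw [LieSubmodule.mem_bot]
    exact hZ x (h1 hx) y
  have hsol : IsSolvable J := by
    refine IsSolvable.mk (R := ℂ) (k := 2) ((LieIdeal.derivedSeries_eq_bot_iff J 2).mpr ?_)
    exact le_bot_iff.mp h2
  rw [LieIdeal.solvable_iff_le_radical, hrad] at hsol
  rw [_root_.eq_bot_iff]
  intro y hy
  obtain ⟨x, rfl⟩ := hqs y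
  rw [LieSubmodule.mem_bot, hq0]
  exact hsol hy

lemma lie_eq_zero_of_mem_center (Z : LieIdeal ℂ L) (hZ : ∀ z ∈ Z, ∀ y : L, ⁅z, y⁆ = 0)
    [IsKilling ℂ (L ⧸ Z)] (t m : L) (h : ⁅t, m⁆ ∈ Z) : ⁅t, m⁆ = 0 := by
  rw [← Module.forall_dual_apply_eq_zero_iff ℂ]
  intro f
  have hZ' : ∀ z ∈ Z, ∀ y : L, ⁅y, z⁆ = 0 := fun z hz y => by
    rw [← lie_skew, hZ z hz, neg_zero]
  let q : L →ₗ[ℂ] (L ⧸ Z) := Z.toSubmodule.mkQ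
  have hqs : Function.Surjective q := Submodule.mkQ_surjective _
  have hql : ∀ x y, q ⁅x, y⁆ = ⁅q x, q y⁆ := fun x y => rfl
  have hq0 : ∀ z ∈ Z, q z = 0 := fun z hz => (Submodule.Quotient.mk_eq_zero _).2 hz
  let β : L →ₗ[ℂ] L →ₗ[ℂ] ℂ := LinearMap.mk₂ ℂ (fun u y : L => f ⁅u, y⁆) (by simp) (by simp)
    (by simp) (by simp)
  let β₁ : L →ₗ[ℂ] Module.Dual ℂ (L ⧸ Z) :=
    { toFun := fun u => Z.toSubmodule.liftQ (β u) (fun z hz => by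
        change f ⁅u, z⁆ = 0
        rw [hZ' z hz, map_zero])
      map_add' := fun u v => by
        ext w
        obtain ⟨w, rfl⟩ := hqs w
        change f ⁅u + v, w⁆ = f ⁅u, w⁆ + f ⁅v, w⁆
        simp
      map_smul' := fun u v => by
        ext w
        obtain ⟨w, rfl⟩ := hqs w
        change f ⁅u • v, w⁆ = u • f ⁅v, w⁆
        simp }
  let β₂ : (L ⧸ Z) →ₗ[ℂ] Module.Dual ℂ (L ⧸ Z) := Z.toSubmodule.liftQ β₁ (fun z hz => by
        rw [LinearMap.mem_ker]
        ext w
        obtain ⟨w, rfl⟩ := hqs w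
        change f ⁅z, w⁆ = 0
        rw [hZ z hz, map_zero])
  have hβ₂ : ∀ x y, β₂ (q x) (q y) = f ⁅x, y⁆ := fun x y => rfl
  let κ := killingForm ℂ (L ⧸ Z)
  have hκ : κ.Nondegenerate := IsKilling.killingForm_nondegenerate ℂ (L ⧸ Z)
  let D₀ : (L ⧸ Z) →ₗ[ℂ] (L ⧸ Z) := (LinearMap.BilinForm.toDual κ hκ).symm.toLinearMap ∘ₗ β₂
  have hD₀ : ∀ x y, κ (D₀ x) y = β₂ x y := by
    intro x y
    rw [← LinearMap.BilinForm.toDual_def (b := hκ)]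
    simp [D₀]
  have hinv : ∀ x y z, κ ⁅x, y⁆ z = κ x ⁅y, z⁆ :=
    LieModule.traceForm_apply_lie_apply ℂ (L ⧸ Z) (L ⧸ Z)
  let D : LieDerivation ℂ (L ⧸ Z) (L ⧸ Z) :=
    { toLinearMap := D₀
      leibniz' := by
        intro a b
        apply (LinearMap.BilinForm.toDual κ hκ).injective
        ext w
        rw [map_sub, LinearMap.sub_apply]
        simp only [LinearMap.BilinForm.toDual_def]
        rw [← lie_skew a (D₀ b), ← lie_skew b (D₀ a)]
        simp only [map_neg, LinearMap.neg_apply, hinv, hD₀]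
        obtain ⟨a, rfl⟩ := hqs a
        obtain ⟨b, rfl⟩ := hqs b
        obtain ⟨w, rfl⟩ := hqs w
        simp only [← hql, hβ₂]
        rw [leibniz_lie a b w]
        simp only [map_add]
        abel }
  obtain ⟨d, hd⟩ := LieDerivation.IsKilling.exists_eq_ad D
  have hd' : ∀ x, D₀ x = ⁅d, x⁆ := fun x => by
    have h1 := LinearMap.congr_fun (LieDerivation.coe_ad_apply_eq_ad_apply (R := ℂ) d) x
    rw [hd] at h1
    exact h1
  rw [← hβ₂, ← hD₀, hd', hinv, ← hql, hq0 _ h, map_zero]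

lemma cartan_quot (Z : LieIdeal ℂ L) (hZ : ∀ z ∈ Z, ∀ y : L, ⁅z, y⁆ = 0)
    (H : LieSubalgebra ℂ L) (hH : H.IsCartanSubalgebra) :
    ∃ K : LieSubalgebra ℂ (L ⧸ Z), K.IsCartanSubalgebra ∧
      ∀ h ∈ H, Z.toSubmodule.mkQ h ∈ K := by
  let q : L →ₗ⁅ℂ⁆ (L ⧸ Z) := { Z.toSubmodule.mkQ with map_lie' := rfl }
  have hqs : Function.Surjective q := Submodule.mkQ_surjective _
  have hq0 : ∀ z, q z = 0 ↔ z ∈ Z := fun z => Submodule.Quotient.mk_eq_zero _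
  have hnil := hH.nilpotent
  have hself := hH.self_normalizing
  have hZH : ∀ z ∈ Z, z ∈ H := by
    intro z hz
    rw [← hself, mem_normalizer_iff]
    intro x hx
    rw [hZ z hz]
    exact H.zero_mem
  refine ⟨H.map q, ⟨?_, ?_⟩, fun h hh => ⟨h, hh, rfl⟩⟩
  · let p : H →ₗ⁅ℂ⁆ H.map q :=
      { toFun := fun h => ⟨q h, ⟨h, h.2, rfl⟩⟩
        map_add' := fun _ _ => rfl
        map_smul' := fun _ _ => rfl
        map_lie' := rfl }
    have hp : Function.Surjective p := by
      rintro ⟨_, h, hh, rfl⟩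
      exact ⟨⟨h, hh⟩, rfl⟩
    exact hp.lieAlgebra_isNilpotent
  · apply le_antisymm _ (le_normalizer _)
    intro y hy
    obtain ⟨m, rfl⟩ := hqs y
    rw [mem_normalizer_iff] at hy
    refine ⟨m, ?_, rfl⟩
    change m ∈ H
    rw [← hself, mem_normalizer_iff]
    intro x hx
    obtain ⟨x', hx', hxx⟩ := hy (q x) ⟨x, hx, rfl⟩
    have h1 : ⁅m, x⁆ - x' ∈ Z := by
      rw [← hq0, map_sub, LieHom.map_lie, ← hxx]
      exact sub_self _
    have := H.add_mem (hZH _ h1) hx'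
    simpa using this

lemma cartan_toral (hred : radical ℂ L = center ℂ L) (H : LieSubalgebra ℂ L)
    (hH : H.IsCartanSubalgebra) :
    (∀ s ∈ H, ∀ t ∈ H, ⁅s, t⁆ = 0) ∧ (∀ t ∈ H, ∀ m : L, ⁅t, ⁅t, m⁆⁆ = 0 → ⁅t, m⁆ = 0) := by
  set Z : LieIdeal ℂ L := center ℂ L with hZdef
  have hZ : ∀ z ∈ Z, ∀ y : L, ⁅z, y⁆ = 0 := by
    intro z hz y
    rw [← lie_skew, (LieModule.mem_maxTrivSubmodule ℂ L L z).1 hz y, neg_zero]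
  have hT := quot_hasTrivialRadical Z hZ hred
  obtain ⟨K, hK, hHK⟩ := cartan_quot Z hZ H hH
  let q : L →ₗ[ℂ] (L ⧸ Z) := Z.toSubmodule.mkQ
  have hql : ∀ x y, q ⁅x, y⁆ = ⁅q x, q y⁆ := fun x y => rfl
  have hq0 : ∀ z, q z = 0 ↔ z ∈ Z := fun z => Submodule.Quotient.mk_eq_zero _
  have hKab : IsLieAbelian K := inferInstance
  constructor
  · intro s hs t ht
    apply lie_eq_zero_of_mem_center Z hZ
    rw [← hq0, hql]
    exact congrArg Subtype.val (hKab.trivial ⟨q s, hHK s hs⟩ ⟨q t, hHK t ht⟩)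
  · intro t ht m hm
    apply lie_eq_zero_of_mem_center Z hZ
    rw [← hq0, hql]
    have hss := (IsKilling.isSemisimple_ad_of_mem_isCartanSubalgebra
      (K := ℂ) (L := L ⧸ Z) (H := K) (x := q t) (hHK t ht)).isFinitelySemisimple.maxGenEigenspace_eq_eigenspace 0
    have h1 : q m ∈ (ad ℂ (L ⧸ Z) (q t)).maxGenEigenspace 0 := by
      rw [Module.End.mem_maxGenEigenspace]
      refine ⟨2, ?_⟩
      simp only [zero_smul, sub_zero, pow_two]
      change ⁅q t, ⁅q t, q m⁆⁆ = 0
      rw [← hql, ← hql, hm, map_zero]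
    rw [hss, Module.End.mem_eigenspace_iff, zero_smul] at h1
    exact h1

lemma exists_cartan_ge (T : LieSubalgebra ℂ L)
    (hab : ∀ s ∈ T, ∀ t ∈ T, ⁅s, t⁆ = 0)
    (hss : ∀ t ∈ T, ∀ m : L, ⁅t, ⁅t, m⁆⁆ = 0 → ⁅t, m⁆ = 0) :
    ∃ H₁ : LieSubalgebra ℂ L, H₁.IsCartanSubalgebra ∧ T ≤ H₁ := by
  let C : LieSubalgebra ℂ L :=
    { carrier := {m | ∀ t ∈ T, ⁅t, m⁆ = 0}
      add_mem' := fun {a b} ha hb t ht => by rw [lie_add, ha t ht, hb t ht, add_zero]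
      zero_mem' := fun t _ => lie_zero t
      smul_mem' := fun c x hx t ht => by rw [lie_smul, hx t ht, smul_zero]
      lie_mem' := fun {a b} ha hb t ht => by
        rw [leibniz_lie, ha t ht, hb t ht, lie_zero, zero_lie, add_zero] }
  have hC : ∀ m, m ∈ C ↔ ∀ t ∈ T, ⁅t, m⁆ = 0 := fun m => Iff.rfl
  have hTC : T ≤ C := fun t ht => (hC t).2 fun s hs => hab s hs t ht
  obtain ⟨x, hx⟩ := exists_isCartanSubalgebra_engel ℂ C
  set K := engel ℂ x with hKdef
  have hTK : ∀ t (ht : t ∈ T), (⟨t, hTC ht⟩ : C) ∈ K := by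
    intro t ht
    rw [← hx.self_normalizing, mem_normalizer_iff]
    intro y hy
    have : ⁅(⟨t, hTC ht⟩ : C), y⁆ = 0 := Subtype.ext (y.2 t ht)
    rw [this]
    exact K.zero_mem
  have hnil := hx.nilpotent
  refine ⟨K.map C.incl, ⟨?_, ?_⟩, fun t ht => ⟨⟨t, hTC ht⟩, hTK t ht, rfl⟩⟩
  · let p : K →ₗ⁅ℂ⁆ K.map C.incl :=
      { toFun := fun h => ⟨C.incl h, ⟨h, h.2, rfl⟩⟩
        map_add' := fun _ _ => rfl
        map_smul' := fun _ _ => rfl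
        map_lie' := rfl }
    have hp : Function.Surjective p := by
      rintro ⟨_, h, hh, rfl⟩
      exact ⟨⟨h, hh⟩, rfl⟩
    exact hp.lieAlgebra_isNilpotent
  · apply le_antisymm _ (le_normalizer _)
    intro m hm
    rw [mem_normalizer_iff] at hm
    have hmC : m ∈ C := by
      rw [hC]
      intro t ht
      apply hss t ht
      obtain ⟨y, -, hy⟩ := hm t ⟨⟨t, hTC ht⟩, hTK t ht, rfl⟩
      have h1 : ⁅m, t⁆ ∈ C := by rw [← hy]; exact y.2
      rw [← lie_skew t m, lie_neg, h1 t ht, neg_zero]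
    refine ⟨⟨m, hmC⟩, ?_, rfl⟩
    change (⟨m, hmC⟩ : C) ∈ K
    rw [← hx.self_normalizing, mem_normalizer_iff]
    intro y hy
    obtain ⟨z, hz, hzy⟩ := hm y ⟨y, hy, rfl⟩
    have : ⁅(⟨m, hmC⟩ : C), y⁆ = z := Subtype.ext hzy.symm
    rw [this]
    exact hz

end reductive

end FixedCartan

/-- Let `L` be a finite-dimensional reductive complex Lie algebra, `g` an
automorphism of `L` of finite order `n`, `H` a Cartan subalgebra of `L` and `H₀` any Cartan
subalgebra of the fixed-point subalgebra `L^g`.  Then `dim (H^g) ≤ dim H₀`, with equality if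
and only if `H^g = H ∩ L^g` is a Cartan subalgebra of `L^g`. -/
theorem finrank_fixed_cartan_le_and_eq_iff
    [FiniteDimensional ℂ L] (hred : LieAlgebra.IsReductive ℂ L)
    (g : L ≃ₗ⁅ℂ⁆ L) (n : ℕ) (hn : 0 < n) (hg : ∀ x, (⇑g)^[n] x = x)
    (H : LieSubalgebra ℂ L) (hH : H.IsCartanSubalgebra)
    (H₀ : LieSubalgebra ℂ g.fixedSubalgebra) (hH₀ : H₀.IsCartanSubalgebra) :
    Module.finrank ℂ (LieSubalgebra.comap g.fixedSubalgebra.incl H) ≤ Module.finrank ℂ H₀ ∧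
      (Module.finrank ℂ (LieSubalgebra.comap g.fixedSubalgebra.incl H) = Module.finrank ℂ H₀ ↔
        (LieSubalgebra.comap g.fixedSubalgebra.incl H).IsCartanSubalgebra) := by
  set T := LieSubalgebra.comap g.fixedSubalgebra.incl H with hT
  obtain ⟨hab, hss⟩ := FixedCartan.cartan_toral hred H hH
  obtain ⟨H₁, hH₁, hTH⟩ := FixedCartan.exists_cartan_ge T
    (fun s hs t ht => Subtype.ext (hab s hs t ht))
    (fun t ht m hm => Subtype.ext (hss t ht m (congrArg Subtype.val hm)))
  have h0 := FixedCartan.finrank_cartan_eq_rank H₀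
  have h1 := FixedCartan.finrank_cartan_eq_rank H₁
  refine ⟨?_, ?_, ?_⟩
  · rw [h0, ← h1]
    exact Submodule.finrank_mono hTH
  · intro h
    have : T = H₁ := by
      apply LieSubalgebra.toSubmodule_injective
      apply Submodule.eq_of_le_of_finrank_eq hTH
      exact h.trans (h0.trans h1.symm)
    rw [this]
    exact hH₁
  · intro h
    rw [h0]
    exact FixedCartan.finrank_cartan_eq_rank T
end

section
/- Let 𝔤 be a finite-dimensional reductive complex Lie algebra and let g be an automorphism of 𝔤 of finite order. Then there exists a Cartan subalgebra 𝓗 of 𝔤 such that 𝓗^g := 𝓗 ∩ 𝔤^g is a Cartan subalgebra of the fixed-point subalgebra 𝔤^g. -/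
variable {L : Type*} [LieRing L] [LieAlgebra ℂ L]

namespace CartanFix

open LieAlgebra LieModule

section Lie

/-- Consequence of Lie's theorem. -/
lemma lie_nil (S : Type*) [LieRing S] [LieAlgebra ℂ S] [IsSolvable S] (a b c : S) (d : ℕ) :
    ∀ (V : Type _) [AddCommGroup V] [Module ℂ V] [LieRingModule S V] [LieModule ℂ S V]
      [FiniteDimensional ℂ V], Module.finrank ℂ V ≤ d →
      IsNilpotent ((toEnd ℂ S V ⁅a, b⁆) * (toEnd ℂ S V c)) := by
  induction d with
  | zero =>
    intro V _ _ _ _ _ hd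
    have : Subsingleton V := Module.finrank_zero_iff (R := ℂ).mp (by omega)
    exact ⟨1, LinearMap.ext fun x => Subsingleton.elim _ _⟩
  | succ d ih =>
    intro V _ _ _ _ _ hd
    rcases subsingleton_or_nontrivial V with h | h
    · exact ⟨1, LinearMap.ext fun x => Subsingleton.elim _ _⟩
    obtain ⟨χ, hχ⟩ := exists_nontrivial_weightSpace_of_isSolvable ℂ S V
    set N : LieSubmodule ℂ S V := weightSpace V χ with hN
    have hq : Module.finrank ℂ (V ⧸ N) ≤ d := by
      have h1 := Submodule.finrank_quotient_add_finrank N.toSubmodule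
      have h2 : 0 < Module.finrank ℂ N := Module.finrank_pos
      change Module.finrank ℂ (V ⧸ N.toSubmodule) ≤ d
      change 0 < Module.finrank ℂ N.toSubmodule at h2
      omega
    obtain ⟨m, hm⟩ := ih (V ⧸ N) hq
    have hab : ∀ v ∈ N, ⁅⁅a, b⁆, v⁆ = 0 := by
      intro v hv
      rw [hN, mem_weightSpace] at hv
      rw [lie_lie, hv, hv, lie_smul, lie_smul, hv, hv, smul_smul, smul_smul, mul_comm, sub_self]
    have hpow : ∀ k (v : V), LieSubmodule.Quotient.mk' N
        ((((toEnd ℂ S V ⁅a, b⁆) * (toEnd ℂ S V c)) ^ k) v) =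
        (((toEnd ℂ S (V ⧸ N) ⁅a, b⁆) * (toEnd ℂ S (V ⧸ N) c)) ^ k) (LieSubmodule.Quotient.mk' N v) := by
      intro k
      induction k with
      | zero => intro v; simp
      | succ k ihk =>
        intro v
        rw [pow_succ, Module.End.mul_apply, ihk, pow_succ, Module.End.mul_apply]
        rfl
    refine ⟨m + 1, LinearMap.ext fun v => ?_⟩
    rw [pow_succ', Module.End.mul_apply]
    have h1 : (((toEnd ℂ S V ⁅a, b⁆) * (toEnd ℂ S V c)) ^ m) v ∈ N := by
      rw [← LieSubmodule.Quotient.mk_eq_zero, hpow, hm]; rfl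
    simp only [Module.End.mul_apply, toEnd_apply_apply, LinearMap.zero_apply]
    exact hab _ (N.lie_mem h1)

lemma killing_lie_eq_zero {A : Type*} [LieRing A] [LieAlgebra ℂ A] [FiniteDimensional ℂ A]
    (S : LieSubalgebra ℂ A) [IsSolvable S] (a b c : S) :
    killingForm ℂ A (⁅a, b⁆ : S) c = 0 := by
  have := lie_nil S a b c _ A le_rfl
  exact (LinearMap.isNilpotent_trace_of_isNilpotent this).eq_zero

end Lie

section Kreknin

variable {A : Type*} [LieRing A] [LieAlgebra ℂ A] (g : A ≃ₗ⁅ℂ⁆ A) (n : ℕ) (ζ : ℂ)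

/-- eigenspaces -/
def V (k : ℕ) : Submodule ℂ A := Module.End.eigenspace (g : A →ₗ[ℂ] A) (ζ ^ k)

lemma mem_V {k : ℕ} {x : A} : x ∈ V g ζ k ↔ g x = ζ ^ k • x := by
  simp [V]

/-- projections -/
noncomputable def p (k : ℕ) : A →ₗ[ℂ] A :=
  (n : ℂ)⁻¹ • ∑ j ∈ Finset.range n, ((ζ ^ (k * j))⁻¹) • ((g : A →ₗ[ℂ] A) ^ j)

lemma p_apply (k : ℕ) (x : A) :
    p g n ζ k x = (n : ℂ)⁻¹ • ∑ j ∈ Finset.range n, ((ζ ^ (k * j))⁻¹) • (⇑g)^[j] x := by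
  simp only [p, LinearMap.smul_apply, LinearMap.sum_apply, Module.End.pow_apply]
  rfl

variable {g n ζ}

lemma p_mem (M : Submodule ℂ A) (hM : ∀ x ∈ M, g x ∈ M) (k : ℕ) {x : A} (hx : x ∈ M) :
    p g n ζ k x ∈ M := by
  rw [p_apply]
  refine M.smul_mem _ (M.sum_mem fun j hj => M.smul_mem _ ?_)
  clear hj
  induction j with
  | zero => simpa
  | succ j ih => rw [Function.iterate_succ_apply']; exact hM _ ih

lemma iter_V {k : ℕ} {x : A} (hx : x ∈ V g ζ k) (j : ℕ) : (⇑g)^[j] x = (ζ ^ (k * j)) • x := by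
  rw [mem_V] at hx
  induction j with
  | zero => simp
  | succ j ih =>
    rw [Function.iterate_succ_apply', ih, map_smul, hx, smul_smul, ← pow_add, mul_add, mul_one]

lemma p_self (hn : 0 < n) (hζ : IsPrimitiveRoot ζ n) {k : ℕ} {x : A} (hx : x ∈ V g ζ k) :
    p g n ζ k x = x := by
  have h0 : ζ ≠ 0 := hζ.ne_zero hn.ne'
  have hn' : (n : ℂ) ≠ 0 := by exact_mod_cast hn.ne'
  rw [p_apply]
  have : ∀ j ∈ Finset.range n, ((ζ ^ (k * j))⁻¹) • (⇑g)^[j] x = x := by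
    intro j _
    rw [iter_V hx, smul_smul, inv_mul_cancel₀ (pow_ne_zero _ h0), one_smul]
  rw [Finset.sum_congr rfl this, Finset.sum_const, Finset.card_range, ← Nat.cast_smul_eq_nsmul ℂ,
    smul_smul, inv_mul_cancel₀ hn', one_smul]

lemma p_mem_V (hn : 0 < n) (hζ : IsPrimitiveRoot ζ n) (hg : ∀ x, (⇑g)^[n] x = x) (k : ℕ) (x : A) :
    p g n ζ k x ∈ V g ζ k := by
  have h0 : ζ ≠ 0 := hζ.ne_zero hn.ne'
  rw [mem_V, p_apply, map_smul, smul_comm]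
  congr 1
  rw [map_sum, Finset.smul_sum]
  have e : ∀ j, g ((ζ ^ (k * j))⁻¹ • (⇑g)^[j] x)
      = ζ ^ k • ((ζ ^ (k * (j+1)))⁻¹ • (⇑g)^[j+1] x) := by
    intro j
    rw [map_smul, Function.iterate_succ_apply', smul_smul]
    congr 1
    rw [mul_add, mul_one, pow_add]
    field_simp
  simp_rw [e]
  have := Finset.sum_range_succ' (fun j => ζ ^ k • ((ζ ^ (k * j))⁻¹ • (⇑g)^[j] x)) n
  rw [Finset.sum_range_succ] at this
  have e2 : ζ ^ k • ((ζ ^ (k * n))⁻¹ • (⇑g)^[n] x) = ζ ^ k • ((ζ ^ (k * 0))⁻¹ • (⇑g)^[0] x) := by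
    rw [hg, mul_comm k n, pow_mul, hζ.pow_eq_one]; simp
  rw [e2] at this
  exact (add_right_cancel this).symm

lemma p_sum (hn : 0 < n) (hζ : IsPrimitiveRoot ζ n) (x : A) :
    ∑ i ∈ Finset.range n, p g n ζ i x = x := by
  have h0 : ζ ≠ 0 := hζ.ne_zero hn.ne'
  have hn' : (n : ℂ) ≠ 0 := by exact_mod_cast hn.ne'
  simp_rw [p_apply]
  rw [← Finset.smul_sum, Finset.sum_comm]
  simp_rw [← Finset.sum_smul]
  rw [Finset.sum_eq_single 0]
  · simp [smul_smul, hn', ← Nat.cast_smul_eq_nsmul ℂ]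
  · intro j hj hj0
    have hjn := Finset.mem_range.mp hj
    have h1 : (ζ ^ j)⁻¹ ≠ 1 := by
      intro h
      exact hζ.pow_ne_one_of_pos_of_lt hj0 hjn (inv_eq_one.mp h)
    have h2 : ∑ i ∈ Finset.range n, (ζ ^ (i * j))⁻¹ = 0 := by
      have : ∀ i ∈ Finset.range n, (ζ ^ (i * j))⁻¹ = ((ζ ^ j)⁻¹) ^ i := by
        intro i _; rw [inv_pow, ← pow_mul, mul_comm]
      rw [Finset.sum_congr rfl this, geom_sum_eq h1, inv_pow, ← pow_mul, mul_comm, pow_mul,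
        hζ.pow_eq_one]
      simp
    rw [h2, zero_smul]
  · intro h; simp at h; omega

lemma p_zero (hn : 0 < n) (hζ : IsPrimitiveRoot ζ n) {j k : ℕ} (hjk : ζ ^ j ≠ ζ ^ k) 
    (hg : ∀ x, (⇑g)^[n] x = x) {x : A} (hx : x ∈ V g ζ j) :
    p g n ζ k x = 0 := by
  have h1 := p_mem_V hn hζ hg k x
  have h2 : p g n ζ k x ∈ V g ζ j := by
    apply p_mem _ _ _ hx
    intro y hy
    rw [mem_V] at hy ⊢
    rw [hy, map_smul, hy]
  rw [mem_V] at h1 h2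
  rw [h1] at h2
  have : (ζ ^ k - ζ ^ j) • p g n ζ k x = 0 := by rw [sub_smul, h2, sub_self]
  rcases smul_eq_zero.mp this with h | h
  · exact absurd (sub_eq_zero.mp h).symm hjk
  · exact h

lemma lie_V {i j : ℕ} {x y : A} (hx : x ∈ V g ζ i) (hy : y ∈ V g ζ j) : ⁅x, y⁆ ∈ V g ζ (i + j) := by
  rw [mem_V] at *
  rw [LieEquiv.map_lie, hx, hy, smul_lie, lie_smul, smul_smul, pow_add]

variable (g n ζ) in
/-- The subalgebra generated by `I` and components of degree at least `k`. -/
def Ak (I : LieIdeal ℂ A) (k : ℕ) (M : LieIdeal ℂ A) : LieSubalgebra ℂ A :=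
  LieSubalgebra.lieSpan ℂ A ({x | x ∈ I} ∪ {x | x ∈ M ∧ ∃ j, k ≤ j ∧ j < n ∧ x ∈ V g ζ j})

variable {I M : LieIdeal ℂ A}

lemma Ak_I {k : ℕ} {x : A} (hx : x ∈ I) : x ∈ Ak g n ζ I k M :=
  LieSubalgebra.subset_lieSpan (Or.inl hx)

lemma Ak_M {k j : ℕ} {x : A} (hx : x ∈ M) (h1 : k ≤ j) (h2 : j < n) (h3 : x ∈ V g ζ j) :
    x ∈ Ak g n ζ I k M :=
  LieSubalgebra.subset_lieSpan (Or.inr ⟨hx, j, h1, h2, h3⟩)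

variable (g n ζ) in
/-- auxiliary span -/
def W (I : LieIdeal ℂ A) (k : ℕ) (M : LieIdeal ℂ A) : Submodule ℂ A :=
  Submodule.span ℂ ({x | x ∈ I} ∪
    {x | ∃ a ∈ M, ∃ b, ∃ s, k ≤ s ∧ s < n ∧ b ∈ M ∧ b ∈ V g ζ s ∧ x = ⁅a, b⁆})

lemma lie_Ak_mem_W {k : ℕ} {u : A} (hu : u ∈ Ak g n ζ I k M) :
    ∀ v ∈ M, ⁅v, u⁆ ∈ W g n ζ I k M := by
  unfold Ak at hu
  induction hu using LieSubalgebra.lieSpan_induction with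
  | mem x hx =>
    intro v hv
    rcases hx with hx | ⟨hx, j, h1, h2, h3⟩
    · exact Submodule.subset_span (Or.inl (I.lie_mem hx))
    · exact Submodule.subset_span (Or.inr ⟨v, hv, x, j, h1, h2, hx, h3, rfl⟩)
  | zero => intro v _; rw [lie_zero]; exact Submodule.zero_mem _
  | add x y _ _ hx hy => intro v hv; rw [lie_add]; exact Submodule.add_mem _ (hx v hv) (hy v hv)
  | smul r x _ hx => intro v hv; rw [lie_smul]; exact Submodule.smul_mem _ _ (hx v hv)
  | lie x y _ _ hx hy =>
    intro v hv
    rw [leibniz_lie, ← lie_skew x ⁅v, y⁆]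
    exact Submodule.add_mem _ (hy _ (lie_mem_left ℂ A M _ _ hv))
      (Submodule.neg_mem _ (hx _ (lie_mem_left ℂ A M _ _ hv)))

lemma p_W (hn : 0 < n) (hζ : IsPrimitiveRoot ζ n) (hg : ∀ x, (⇑g)^[n] x = x)
    (hI : ∀ x ∈ I, g x ∈ I) (hM : ∀ x ∈ M, g x ∈ M) (hV : ∀ x ∈ V g ζ 0, x ∈ I) {k : ℕ}
    (hk : k < n) {w : A} (hw : w ∈ W g n ζ I k M) : p g n ζ k w ∈ Ak g n ζ I (k + 1) M := by
  unfold W at hw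
  induction hw using Submodule.span_induction with
  | zero => rw [map_zero]; exact zero_mem _
  | add x y _ _ hx hy => rw [map_add]; exact add_mem hx hy
  | smul r x _ hx => rw [map_smul]; exact (Ak g n ζ I (k + 1) M).smul_mem _ hx
  | mem x hx =>
    rcases hx with hx | ⟨a, ha, b, s, h1, h2, hb, hbs, rfl⟩
    · exact Ak_I (p_mem I.toSubmodule hI k hx)
    rw [← p_sum (g := g) hn hζ a, sum_lie, map_sum]
    refine sum_mem fun i hi => ?_
    have hin := Finset.mem_range.mp hi
    have hpa := p_mem_V hn hζ hg i a
    have hlie := lie_V hpa hbs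
    by_cases hd : ζ ^ (i + s) = ζ ^ k
    · have hVk : ⁅p g n ζ i a, b⁆ ∈ V g ζ k := by rw [mem_V] at hlie ⊢; rw [hlie, hd]
      rw [p_self hn hζ hVk]
      have hdv : n ∣ i + s - k := by
        rw [← hζ.pow_eq_one_iff_dvd]
        have h0 : ζ ^ k ≠ 0 := pow_ne_zero _ (hζ.ne_zero hn.ne')
        apply mul_right_cancel₀ h0
        rw [← pow_add, one_mul, Nat.sub_add_cancel (by omega), hd]
      rcases h1.eq_or_lt with rfl | h1
      · have : i = 0 := Nat.eq_zero_of_dvd_of_lt (by simpa using hdv) hin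
        subst this
        exact Ak_I (lie_mem_left ℂ A I _ _ (hV _ hpa))
      · have hik : k + 1 ≤ i := by
          by_contra hcon
          have h3 : i + s ≠ k := by omega
          have := Nat.le_of_dvd (by omega) hdv
          omega
        exact LieSubalgebra.lie_mem _ (Ak_M (p_mem M.toSubmodule hM i ha) hik hin hpa)
          (Ak_M hb h1 h2 hbs)
    · rw [p_zero hn hζ hd hg hlie]; exact zero_mem _

lemma stable_lie {N : LieIdeal ℂ A} (hN : ∀ x ∈ N, g x ∈ N) : ∀ x ∈ ⁅N, N⁆, g x ∈ ⁅N, N⁆ := by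
  intro x hx
  rw [← LieSubmodule.mem_toSubmodule, LieSubmodule.lieIdeal_oper_eq_linear_span'] at hx
  induction hx using Submodule.span_induction with
  | zero => rw [map_zero]; exact zero_mem _
  | add x y _ _ hx hy => rw [map_add]; exact add_mem hx hy
  | smul r x _ hx => rw [map_smul]; exact (⁅N, N⁆).smul_mem _ hx
  | mem x hx =>
    obtain ⟨a, ha, b, hb, rfl⟩ := hx
    rw [LieEquiv.map_lie]
    exact LieSubmodule.lie_mem_lie (hN _ ha) (hN _ hb)

lemma stable_der {N : LieIdeal ℂ A} (hN : ∀ x ∈ N, g x ∈ N) (k : ℕ) :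
    ∀ x ∈ derivedSeriesOfIdeal ℂ A k N, g x ∈ derivedSeriesOfIdeal ℂ A k N := by
  induction k with
  | zero => simpa
  | succ k ih => rw [derivedSeriesOfIdeal_succ]; exact stable_lie ih

lemma kreknin (hn : 0 < n) (hζ : IsPrimitiveRoot ζ n) (hg : ∀ x, (⇑g)^[n] x = x)
    (hI : ∀ x ∈ I, g x ∈ I) (hV : ∀ x ∈ V g ζ 0, x ∈ I) (k : ℕ) (hk : k ≤ n) :
    ∃ f : ℕ, ∀ M : LieIdeal ℂ A, (∀ x ∈ M, g x ∈ M) →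
      ∀ x ∈ derivedSeriesOfIdeal ℂ A f M, x ∈ Ak g n ζ I k M := by
  induction k with
  | zero =>
    refine ⟨0, fun M hM x hx => ?_⟩
    rw [derivedSeriesOfIdeal_zero] at hx
    rw [← p_sum (g := g) hn hζ x]
    exact sum_mem fun i hi => Ak_M (p_mem M.toSubmodule hM i hx) (Nat.zero_le i)
      (Finset.mem_range.mp hi) (p_mem_V hn hζ hg i x)
  | succ k ih =>
    obtain ⟨f, hf⟩ := ih (by omega)
    refine ⟨f + (f + 1), fun M hM x hx => ?_⟩
    rw [derivedSeriesOfIdeal_add] at hx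
    have hM' := stable_der hM (f + 1)
    have hle : derivedSeriesOfIdeal ℂ A (f + 1) M ≤ M := derivedSeriesOfIdeal_le_self M (f + 1)
    have hx' := hf _ hM' x hx
    refine (LieSubalgebra.lieSpan_le.mpr ?_ : Ak g n ζ I k _ ≤ _) hx'
    rintro y (hy | ⟨hy, j, h1, h2, h3⟩)
    · exact Ak_I hy
    rcases h1.eq_or_lt with rfl | h1
    · have : y ∈ W g n ζ I k M := by
        rw [derivedSeriesOfIdeal_succ, ← LieSubmodule.mem_toSubmodule,
          LieSubmodule.lieIdeal_oper_eq_linear_span'] at hy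
        refine (Submodule.span_le.mpr ?_) hy
        rintro _ ⟨a, ha, b, hb, rfl⟩
        exact lie_Ak_mem_W (hf M hM b hb) a (derivedSeriesOfIdeal_le_self M f ha)
      have := p_W hn hζ hg hI hM hV h2 this
      rwa [p_self hn hζ h3] at this
    · exact Ak_M (hle hy) h1 h2 h3

lemma solvable_of_ideal [IsSolvable I] (hn : 0 < n) (hζ : IsPrimitiveRoot ζ n)
    (hg : ∀ x, (⇑g)^[n] x = x) (hI : ∀ x ∈ I, g x ∈ I) (hV : ∀ x ∈ V g ζ 0, x ∈ I) :
    IsSolvable A := by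
  obtain ⟨f, hf⟩ := kreknin hn hζ hg hI hV n le_rfl
  obtain ⟨l, hl⟩ := IsSolvable.solvable ℂ I
  rw [LieIdeal.derivedSeries_eq_bot_iff] at hl
  have hle : derivedSeriesOfIdeal ℂ A f ⊤ ≤ I := by
    intro x hx
    have := hf ⊤ (fun _ _ => LieSubmodule.mem_top _) x hx
    refine (LieSubalgebra.lieSpan_le.mpr ?_ : Ak g n ζ I n _ ≤ LieIdeal.toLieSubalgebra ℂ A I) this
    rintro y (hy | ⟨hy, j, h1, h2, h3⟩)
    · exact hy
    · omega
  apply IsSolvable.mk (R := ℂ) (k := l + f)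
  rw [derivedSeries_def, derivedSeriesOfIdeal_add, eq_bot_iff, ← hl]
  exact derivedSeriesOfIdeal_mono hle l

lemma solvable_of_nil [FiniteDimensional ℂ A] (hn : 0 < n) (hg : ∀ x, (⇑g)^[n] x = x)
    (hnil : ∀ x, g x = x → IsNilpotent (ad ℂ A x)) : IsSolvable A := by
  obtain ⟨ζ, hζ⟩ : ∃ ζ : ℂ, IsPrimitiveRoot ζ n := ⟨_, Complex.isPrimitiveRoot_exp n hn.ne'⟩
  have hrad := killingCompl_top_le_radical ℂ A
  have : IsSolvable (LieIdeal.killingCompl ℂ A ⊤) :=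
    (LieIdeal.solvable_iff_le_radical ℂ A _).mpr hrad
  refine solvable_of_ideal (I := LieIdeal.killingCompl ℂ A ⊤) hn hζ hg ?_ ?_
  · intro x hx
    rw [LieIdeal.mem_killingCompl] at hx ⊢
    intro y _
    have := killingForm_of_equiv_apply g (g.symm y) x
    rw [LieEquiv.apply_symm_apply] at this
    rw [this]
    exact hx _ (LieSubmodule.mem_top _)
  · intro x hx
    rw [LieIdeal.mem_killingCompl]
    intro y _
    rw [← p_sum (g := g) hn hζ y, map_sum, LinearMap.sum_apply]
    refine Finset.sum_eq_zero fun i hi => ?_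
    have hpi := p_mem_V hn hζ hg i y
    set z := p g n ζ i y
    rw [mem_V] at hx hpi
    rw [pow_zero, one_smul] at hx
    rcases Nat.eq_zero_or_pos i with rfl | hi0
    · rw [pow_zero, one_smul] at hpi
      have hT : LieModule.IsNilpotent g.fixedSubalgebra A := by
        rw [LieModule.isNilpotent_iff_forall' (R := ℂ)]
        rintro ⟨t, ht⟩
        exact hnil t ht
      have := LieModule.traceForm_eq_zero_of_isNilpotent ℂ g.fixedSubalgebra A
      exact congrArg (fun f => f ⟨z, hpi⟩ ⟨x, hx⟩) this
    · have h1 := killingForm_of_equiv_apply g z x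
      rw [hpi, hx, map_smul, LinearMap.smul_apply, smul_eq_mul] at h1
      have h2 : ζ ^ i ≠ 1 := hζ.pow_ne_one_of_pos_of_lt hi0.ne' (Finset.mem_range.mp hi)
      have h3 : (ζ ^ i - 1) * killingForm ℂ A z x = 0 := by rw [sub_mul, h1]; ring
      exact (mul_eq_zero.mp h3).resolve_left (sub_ne_zero.mpr h2)

end Kreknin

end CartanFix

/-- Let `L` be a finite-dimensional reductive complex Lie algebra and `g` an
automorphism of `L` of finite order `n`.  Then there exists a Cartan subalgebra `H` of `L` such
that `H^g = H ∩ L^g` is a Cartan subalgebra of the fixed-point subalgebra `L^g`. -/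
theorem exists_cartan_with_fixed_cartan
    [FiniteDimensional ℂ L] (hred : LieAlgebra.IsReductive ℂ L)
    (g : L ≃ₗ⁅ℂ⁆ L) (n : ℕ) (hn : 0 < n) (hg : ∀ x, (⇑g)^[n] x = x) :
    ∃ H : LieSubalgebra ℂ L, H.IsCartanSubalgebra ∧
      (LieSubalgebra.comap g.fixedSubalgebra.incl H).IsCartanSubalgebra := by
  classical
  -- choose a fixed element with Engel subalgebra of minimal dimension
  obtain ⟨x, hxmin⟩ : ∃ x : g.fixedSubalgebra, ∀ y : g.fixedSubalgebra,
      Module.finrank ℂ (LieSubalgebra.engel ℂ (x : L)) ≤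
      Module.finrank ℂ (LieSubalgebra.engel ℂ (y : L)) := by
    let f : g.fixedSubalgebra → ℕ := fun y => Module.finrank ℂ (LieSubalgebra.engel ℂ (y : L))
    exact ⟨Function.argmin f, fun y => Function.argmin_le f y⟩
  have hx : g x = x := x.2
  set C := LieSubalgebra.engel ℂ (x : L) with hC
  -- all fixed elements of `C` act nilpotently on `C`
  have hbot : ∀ y : L, g y = y → y ∈ C → C ≤ LieSubalgebra.engel ℂ y := by
    intro y hy hyC
    let U : LieSubalgebra ℂ L := g.fixedSubalgebra ⊓ C
    let Ex : {LieSubalgebra.engel ℂ z | z ∈ U} :=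
      ⟨C, x, ⟨x.2, LieSubalgebra.self_mem_engel ℂ _⟩, rfl⟩
    suffices IsBot Ex from @this ⟨LieSubalgebra.engel ℂ y, y, ⟨hy, hyC⟩, rfl⟩
    refine LieAlgebra.engel_isBot_of_isMin ?_ U Ex inf_le_right ?_
    · exact Cardinal.natCast_le_aleph0.trans (Cardinal.infinite_iff.mp inferInstance)
    · rintro ⟨_, z, hz, rfl⟩ hzx
      suffices LieSubalgebra.engel ℂ z = C from this.ge
      apply LieSubalgebra.toSubmodule_injective
      exact Submodule.eq_of_le_of_finrank_le hzx (hxmin ⟨z, hz.1⟩)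
  -- `g` restricts to `C`
  have hadg : ∀ (k : ℕ) (y : L), ((LieAlgebra.ad ℂ L x) ^ k) (g y) =
      g (((LieAlgebra.ad ℂ L x) ^ k) y) := by
    intro k
    induction k with
    | zero => intro y; simp
    | succ k ih =>
      intro y
      rw [pow_succ, Module.End.mul_apply, Module.End.mul_apply, ← ih, LieAlgebra.ad_apply,
        LieAlgebra.ad_apply, LieEquiv.map_lie, hx]
  have hgC : ∀ y, g y ∈ C ↔ y ∈ C := by
    intro y
    rw [hC, LieSubalgebra.mem_engel_iff, LieSubalgebra.mem_engel_iff]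
    refine exists_congr fun k => ?_
    rw [hadg]
    constructor
    · intro h; exact g.injective (h.trans (map_zero g).symm)
    · intro h; rw [h, map_zero]
  let gC : C ≃ₗ⁅ℂ⁆ C := LieEquiv.ofSubalgebras C C g (by
    ext y
    rw [LieSubalgebra.mem_map]
    constructor
    · rintro ⟨z, hz, rfl⟩; exact (hgC z).mpr hz
    · intro hy
      refine ⟨g.symm y, (hgC _).mp ?_, ?_⟩
      · rwa [LieEquiv.apply_symm_apply]
      · exact LieEquiv.apply_symm_apply g y)
  have hgC_coe : ∀ y : C, ((gC y : C) : L) = g y := fun y => rfl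
  have hsolv : LieAlgebra.IsSolvable C := by
    refine CartanFix.solvable_of_nil (g := gC) (n := n) hn ?_ ?_
    · intro y
      have : ∀ k : ℕ, (((⇑gC)^[k] y : C) : L) = (⇑g)^[k] y := by
        intro k
        induction k with
        | zero => rfl
        | succ k ih => rw [Function.iterate_succ_apply', Function.iterate_succ_apply', hgC_coe, ih]
      exact Subtype.ext (by rw [this, hg])
    · intro y hy
      have hy' : g (y : L) = y := by rw [← hgC_coe, hy]
      have hle := hbot y hy' y.2
      rw [Module.End.isNilpotent_iff_of_finite]
      intro z
      obtain ⟨k, hk⟩ := (LieSubalgebra.mem_engel_iff ℂ _ _).mp (hle z.2)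
      refine ⟨k, Subtype.ext ?_⟩
      rw [LieSubalgebra.coe_ad_pow, hk]; rfl
  -- `[C, C]` is central
  have hcent : ∀ a b : C, ⁅(a : L), (b : L)⁆ ∈ LieAlgebra.center ℂ L := by
    intro a b
    rw [← show LieAlgebra.radical ℂ L = LieAlgebra.center ℂ L from hred]
    apply LieAlgebra.killingCompl_top_le_radical ℂ L
    rw [LieIdeal.mem_killingCompl]
    intro y _
    rw [LieModule.traceForm_comm]
    obtain ⟨k, hk⟩ := Filter.eventually_atTop.mp
      (LieAlgebra.ad ℂ L x).eventually_codisjoint_ker_pow_range_pow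
    have habC : ⁅(a : L), (b : L)⁆ ∈ C := C.lie_mem a.2 b.2
    obtain ⟨m, hm⟩ := (LieSubalgebra.mem_engel_iff ℂ _ _).mp habC
    have hk' := hk (k + m) (Nat.le_add_right k m)
    have hy : y ∈ LinearMap.ker (LieAlgebra.ad ℂ L x ^ (k + m)) ⊔
      LinearMap.range (LieAlgebra.ad ℂ L x ^ (k + m)) := by rw [hk'.eq_top]; trivial
    obtain ⟨c, hc, _, ⟨d, rfl⟩, rfl⟩ := Submodule.mem_sup.mp hy
    have hcC : c ∈ C := (LieSubalgebra.mem_engel_iff ℂ _ _).mpr ⟨k + m, hc⟩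
    rw [map_add]
    have h1 := CartanFix.killing_lie_eq_zero C a b ⟨c, hcC⟩
    have h1' : killingForm ℂ L ⁅(a : L), (b : L)⁆ c = 0 := h1
    rw [h1', zero_add]
    have hker : ∀ (j : ℕ) (u v : L), killingForm ℂ L u ((LieAlgebra.ad ℂ L x ^ j) v) =
        (-1) ^ j * killingForm ℂ L ((LieAlgebra.ad ℂ L x ^ j) u) v := by
      intro j
      induction j with
      | zero => intro u v; simp
      | succ j ih =>
        intro u v
        rw [pow_succ, Module.End.mul_apply, ih, ← pow_succ, pow_succ' (LieAlgebra.ad ℂ L x),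
          Module.End.mul_apply, LieAlgebra.ad_apply, LieAlgebra.ad_apply,
          LieModule.traceForm_apply_lie_apply']
        ring
    rw [hker, Module.End.pow_map_zero_of_le (Nat.le_add_left m k) hm, map_zero,
      LinearMap.zero_apply, mul_zero]
  have hCnil : LieRing.IsNilpotent C := by
    apply LieSubalgebra.isNilpotent_of_forall_le_engel
    intro y hy z hz
    rw [LieSubalgebra.mem_engel_iff]
    refine ⟨2, ?_⟩
    have := hcent ⟨y, hy⟩ ⟨z, hz⟩
    rw [LieModule.mem_maxTrivSubmodule] at this
    simpa [pow_two] using this y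
  refine ⟨C, ⟨hCnil, LieSubalgebra.normalizer_engel ℂ _⟩, ?_⟩
  have hT : LieSubalgebra.comap g.fixedSubalgebra.incl C = LieSubalgebra.engel ℂ x := by
    ext y
    rw [LieSubalgebra.mem_comap, hC, LieSubalgebra.mem_engel_iff, LieSubalgebra.mem_engel_iff]
    refine exists_congr fun k => ?_
    have := LieSubalgebra.coe_ad_pow ℂ L g.fixedSubalgebra x y k
    rw [LieSubalgebra.coe_incl, ← this, ZeroMemClass.coe_eq_zero]
  refine ⟨?_, by rw [hT]; exact LieSubalgebra.normalizer_engel ℂ _⟩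
  apply LieSubalgebra.isNilpotent_of_forall_le_engel
  intro y hy z hz
  have h := hbot y y.2 hy hz
  rw [LieSubalgebra.mem_engel_iff] at h ⊢
  obtain ⟨k, hk⟩ := h
  refine ⟨k, Subtype.ext ?_⟩
  rw [LieSubalgebra.coe_ad_pow]
  exact hk
end

section
/- Let 𝔤 be a finite-dimensional reductive complex Lie algebra, let g be an automorphism of 𝔤 of finite order, and let 𝓗 be a Cartan subalgebra of 𝔤. Then the fixed-point set 𝓗^g := 𝓗 ∩ 𝔤^g is contained in some Cartan subalgebra of the fixed-point subalgebra 𝔤^g. -/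
variable {L : Type*} [LieRing L] [LieAlgebra ℂ L]

/-- The centralizer of a set, as a Lie subalgebra. -/
def setCentralizer {M : Type*} [LieRing M] [LieAlgebra ℂ M] (T : Set M) : LieSubalgebra ℂ M where
  carrier := {x | ∀ t ∈ T, ⁅t, x⁆ = 0}
  add_mem' := by
    intro a b ha hb t ht
    rw [lie_add, ha t ht, hb t ht, add_zero]
  zero_mem' := by
    intro t _
    exact lie_zero t
  smul_mem' := by
    intro c x hx t ht
    rw [lie_smul, hx t ht, smul_zero]
  lie_mem' := by
    intro x y hx hy t ht
    rw [leibniz_lie, hx t ht, hy t ht, zero_lie, lie_zero, add_zero]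

/-- A commuting set of elements with `ker (ad t)² = ker (ad t)` lies in a Cartan subalgebra. -/
theorem exists_cartan_of_commuting {M : Type*} [LieRing M] [LieAlgebra ℂ M]
    [FiniteDimensional ℂ M] (T : Set M) (hT : ∀ s ∈ T, ∀ t ∈ T, ⁅s, t⁆ = 0)
    (hss : ∀ t ∈ T, ∀ x : M, ⁅t, ⁅t, x⁆⁆ = 0 → ⁅t, x⁆ = 0) :
    ∃ H₀ : LieSubalgebra ℂ M, H₀.IsCartanSubalgebra ∧ T ⊆ H₀ := by
  obtain ⟨a, ha⟩ := LieAlgebra.exists_isCartanSubalgebra_engel ℂ (setCentralizer T)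
  set E := LieSubalgebra.engel ℂ a
  have hTE : ∀ t ∈ T, ∃ e ∈ E, (e : M) = t := by
    intro t ht
    refine ⟨⟨t, fun s hs => hT s hs t ht⟩, ?_, rfl⟩
    rw [← ha.self_normalizing, LieSubalgebra.mem_normalizer_iff]
    intro y _
    have : ⁅(⟨t, fun s hs => hT s hs t ht⟩ : setCentralizer T), y⁆ = 0 := by
      ext
      exact y.2 t ht
    rw [this]
    exact E.zero_mem
  refine ⟨E.map (setCentralizer T).incl, ⟨?_, ?_⟩, ?_⟩
  · have := ha.nilpotent
    let f : E →ₗ⁅ℂ⁆ (E.map (setCentralizer T).incl) :=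
      { toFun := fun e => ⟨(e : setCentralizer T), ⟨e, e.2, rfl⟩⟩
        map_add' := fun _ _ => rfl
        map_smul' := fun _ _ => rfl
        map_lie' := rfl }
    refine Function.Surjective.lieAlgebra_isNilpotent (f := f) ?_
    rintro ⟨_, e, he, rfl⟩
    exact ⟨⟨e, he⟩, rfl⟩
  · refine le_antisymm ?_ (LieSubalgebra.le_normalizer _)
    intro x hx
    rw [LieSubalgebra.mem_normalizer_iff'] at hx
    have hxC : x ∈ setCentralizer T := by
      intro t ht
      apply hss t ht
      obtain ⟨e, he, het⟩ := hTE t ht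
      obtain ⟨y, hy, hyx⟩ := hx t ⟨e, he, het⟩
      rw [← hyx]
      exact y.2 t ht
    refine ⟨⟨x, hxC⟩, ?_, rfl⟩
    show _ ∈ E
    rw [← ha.self_normalizing, LieSubalgebra.mem_normalizer_iff']
    intro y hy
    obtain ⟨z, hz, hzx⟩ := hx y ⟨y, hy, rfl⟩
    have : ⁅y, (⟨x, hxC⟩ : setCentralizer T)⁆ = z := by
      ext
      exact hzx.symm
    rw [this]
    exact hz
  · intro t ht
    obtain ⟨e, he, het⟩ := hTE t ht
    exact ⟨e, he, het⟩

/-- A central extension of a Killing Lie algebra: elements commuting modulo the centre commute. -/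
theorem lie_eq_zero_of_central_ext {K : Type*} [LieRing K] [LieAlgebra ℂ K]
    [FiniteDimensional ℂ K] [LieAlgebra.IsKilling ℂ K] (π : L →ₗ⁅ℂ⁆ K)
    (hπ : Function.Surjective π) (hker : ∀ x, π x = 0 → ∀ y : L, ⁅x, y⁆ = 0)
    (x y : L) (hxy : ⁅π x, π y⁆ = 0) : ⁅x, y⁆ = 0 := by
  obtain ⟨s, hs⟩ := (π : L →ₗ[ℂ] K).exists_rightInverse_of_surjective
    (LinearMap.range_eq_top.mpr hπ)
  have hs' : ∀ k, π (s k) = k := fun k => LinearMap.congr_fun hs k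
  have hcong : ∀ a b c : L, π a = π b → ⁅a, c⁆ = ⁅b, c⁆ := by
    intro a b c h
    rw [← sub_eq_zero, ← sub_lie]
    exact hker _ (by rw [map_sub, h, sub_self]) c
  have hcong' : ∀ a b c : L, π a = π b → ⁅c, a⁆ = ⁅c, b⁆ := by
    intro a b c h
    rw [← lie_skew, hcong a b c h, lie_skew]
  rw [hcong x (s (π x)) y (hs' _).symm, hcong' y (s (π y)) _ (hs' _).symm]
  generalize π x = u at *
  generalize π y = v at *
  rw [← Module.forall_dual_apply_eq_zero_iff ℂ]
  intro φ
  let ω : K →ₗ[ℂ] K →ₗ[ℂ] ℂ := LinearMap.mk₂ ℂ (fun a b => φ ⁅s a, s b⁆)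
    (by intros; simp) (by intros; simp) (by intros; simp) (by intros; simp)
  have hω : ∀ a b, ω a b = φ ⁅s a, s b⁆ := fun _ _ => rfl
  have hnd := LieAlgebra.IsKilling.killingForm_nondegenerate ℂ K
  let D : K →ₗ[ℂ] K := (LinearMap.BilinForm.toDual (killingForm ℂ K) hnd).symm.toLinearMap ∘ₗ ω
  have hD : ∀ a b, killingForm ℂ K (D a) b = ω a b := by
    intro a b
    exact LinearMap.BilinForm.apply_toDual_symm_apply (hB := hnd) (ω a) b
  have hassoc : ∀ a b c : K, killingForm ℂ K ⁅a, b⁆ c = killingForm ℂ K a ⁅b, c⁆ :=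
    fun a b c => LieModule.traceForm_apply_lie_apply ℂ K K a b c
  have hsymm : ∀ a b : K, killingForm ℂ K a b = killingForm ℂ K b a :=
    fun a b => LieModule.traceForm_comm ℂ K K a b
  have hder : ∀ a b, D ⁅a, b⁆ = ⁅a, D b⁆ - ⁅b, D a⁆ := by
    intro a b
    have hinj : Function.Injective (killingForm ℂ K) :=
      (LinearMap.BilinForm.toDual (killingForm ℂ K) hnd).injective
    apply hinj
    ext c
    rw [map_sub, LinearMap.sub_apply, hD, ← lie_skew a (D b), ← lie_skew b (D a), map_neg, map_neg,
      LinearMap.neg_apply, LinearMap.neg_apply, hassoc, hassoc, hD, hD, hω, hω, hω,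
      hcong (s ⁅a, b⁆) ⁅s a, s b⁆ _ (by simp [hs']),
      hcong' (s ⁅a, c⁆) ⁅s a, s c⁆ _ (by simp [hs']),
      hcong' (s ⁅b, c⁆) ⁅s b, s c⁆ _ (by simp [hs']), lie_lie, map_sub]
    ring
  let D' : LieDerivation ℂ K K := ⟨D, hder⟩
  obtain ⟨d, hd⟩ := LieDerivation.IsKilling.exists_eq_ad D'
  have hd' : D u = ⁅d, u⁆ := by
    have : D' u = ⁅d, u⁆ := by rw [← hd, LieDerivation.ad_apply_apply]
    exact this
  rw [← hω, ← hD, hd', hassoc, hxy, map_zero]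

/-- The adjoint image of a reductive Lie algebra is Killing. -/
theorem isKilling_range_ad_of_reductive [FiniteDimensional ℂ L]
    (hred : LieAlgebra.IsReductive ℂ L) : LieAlgebra.IsKilling ℂ (LieDerivation.ad ℂ L).range := by
  have : LieAlgebra.HasTrivialRadical ℂ (LieDerivation.ad ℂ L).range := by
    rw [LieAlgebra.hasTrivialRadical_iff_no_abelian_ideals]
    intro I hI
    let π := (LieDerivation.ad ℂ L).rangeRestrict
    have hπ : ∀ x, π x = 0 → x ∈ LieAlgebra.center ℂ L := by
      intro x hx
      rw [← LieAlgebra.self_module_ker_eq_center, LieModule.mem_ker]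
      intro y
      exact by
        have h : LieDerivation.ad ℂ L x = 0 := congrArg Subtype.val hx
        rw [← LieDerivation.ad_apply_apply (R := ℂ), h, LieDerivation.zero_apply]
    let J : LieIdeal ℂ L := I.comap π
    have hJ : ⁅J, J⁆ ≤ LieAlgebra.center ℂ L := by
      rw [LieSubmodule.lieIdeal_oper_eq_span, LieSubmodule.lieSpan_le]
      rintro _ ⟨a, b, rfl⟩
      apply hπ
      rw [LieHom.map_lie]
      have ha : π a ∈ I := LieIdeal.mem_comap.mp a.2
      have hb : π b ∈ I := LieIdeal.mem_comap.mp b.2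
      have := hI.trivial ⟨_, ha⟩ ⟨_, hb⟩
      exact congrArg Subtype.val this
    have hsol : LieAlgebra.IsSolvable J := by
      rw [LieAlgebra.isSolvable_iff ℂ]
      refine ⟨2, ?_⟩
      rw [LieIdeal.derivedSeries_eq_bot_iff]
      rw [LieAlgebra.derivedSeriesOfIdeal_succ, LieAlgebra.derivedSeriesOfIdeal_succ,
        LieAlgebra.derivedSeriesOfIdeal_zero, LieSubmodule.lie_eq_bot_iff]
      intro a _ b hb
      exact hJ hb a
    rw [LieAlgebra.LieIdeal.solvable_iff_le_radical, hred] at hsol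
    rw [eq_bot_iff]
    intro y hy
    obtain ⟨x, rfl⟩ := LieHom.surjective_rangeRestrict _ y
    have hx : x ∈ LieAlgebra.center ℂ L := hsol (LieIdeal.mem_comap.mpr hy)
    rw [LieSubmodule.mem_bot]
    rw [← LieAlgebra.self_module_ker_eq_center, LieModule.mem_ker] at hx
    apply Subtype.ext
    ext y
    simpa using hx y
  infer_instance

/-- Let `L` be a finite-dimensional reductive complex Lie algebra, `g` an
automorphism of `L` of finite order `n`, and `H` a Cartan subalgebra of `L`.  Then the
fixed-point set `H^g = H ∩ L^g` is contained in some Cartan subalgebra of the fixed-point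
subalgebra `L^g`. -/
theorem fixed_of_cartan_le_cartan_of_fixedSubalgebra
    [FiniteDimensional ℂ L] (hred : LieAlgebra.IsReductive ℂ L)
    (g : L ≃ₗ⁅ℂ⁆ L) (n : ℕ) (hn : 0 < n) (hg : ∀ x, (⇑g)^[n] x = x)
    (H : LieSubalgebra ℂ L) (hH : H.IsCartanSubalgebra) :
    ∃ H₀ : LieSubalgebra ℂ g.fixedSubalgebra, H₀.IsCartanSubalgebra ∧
      LieSubalgebra.comap g.fixedSubalgebra.incl H ≤ H₀ := by
  have hK := isKilling_range_ad_of_reductive hred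
  let π := (LieDerivation.ad ℂ L).rangeRestrict
  have hπ : Function.Surjective π := LieHom.surjective_rangeRestrict _
  have hker : ∀ x, π x = 0 → ∀ y : L, ⁅x, y⁆ = 0 := by
    intro x hx y
    exact by
        have h : LieDerivation.ad ℂ L x = 0 := congrArg Subtype.val hx
        rw [← LieDerivation.ad_apply_apply (R := ℂ), h, LieDerivation.zero_apply]
  have key := lie_eq_zero_of_central_ext π hπ hker
  have hZ : ∀ x, π x = 0 → x ∈ H := by
    intro x hx
    rw [← hH.self_normalizing, LieSubalgebra.mem_normalizer_iff]
    intro y _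
    rw [hker x hx]
    exact H.zero_mem
  have hmem : ∀ x, π x ∈ H.map π → x ∈ H := by
    rintro x ⟨h, hh, hhx⟩
    have : x - h ∈ H := hZ _ (by rw [map_sub, sub_eq_zero]; exact hhx.symm)
    simpa using H.add_mem this hh
  have hcart : (H.map π).IsCartanSubalgebra := by
    refine ⟨?_, ?_⟩
    · have := hH.nilpotent
      let f : H →ₗ⁅ℂ⁆ (H.map π) :=
        { toFun := fun e => ⟨π e, ⟨e, e.2, rfl⟩⟩
          map_add' := fun _ _ => by ext1; simp
          map_smul' := fun _ _ => by ext1; simp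
          map_lie' := by intros; ext1; simp }
      refine Function.Surjective.lieAlgebra_isNilpotent (f := f) ?_
      rintro ⟨_, e, he, rfl⟩
      exact ⟨⟨e, he⟩, rfl⟩
    · refine le_antisymm ?_ (LieSubalgebra.le_normalizer _)
      intro k hk
      obtain ⟨x, rfl⟩ := hπ k
      rw [LieSubalgebra.mem_normalizer_iff] at hk
      refine ⟨x, ?_, rfl⟩
      show x ∈ H
      rw [← hH.self_normalizing, LieSubalgebra.mem_normalizer_iff]
      intro y hy
      apply hmem
      rw [LieHom.map_lie]
      exact hk _ ⟨y, hy, rfl⟩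
  have habel : ∀ s ∈ H, ∀ t ∈ H, ⁅s, t⁆ = 0 := by
    intro s hs t ht
    apply key
    have := LieAlgebra.IsKilling.instIsLieAbelianOfIsCartanSubalgebra ℂ _ (H.map π)
    exact congrArg Subtype.val
      (this.trivial (⟨π s, s, hs, rfl⟩ : H.map π) ⟨π t, t, ht, rfl⟩)
  have hss : ∀ t ∈ H, ∀ x : L, ⁅t, ⁅t, x⁆⁆ = 0 → ⁅t, x⁆ = 0 := by
    intro t ht x hx
    apply key
    have h1 := LieAlgebra.IsKilling.isSemisimple_ad_of_mem_isCartanSubalgebra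
      (K := ℂ) (H := H.map π) (x := π t) ⟨t, ht, rfl⟩
    have h2 := h1.isFinitelySemisimple.maxGenEigenspace_eq_eigenspace 0
    have h3 : π x ∈ (LieAlgebra.ad ℂ _ (π t)).maxGenEigenspace 0 := by
      rw [Module.End.mem_maxGenEigenspace]
      refine ⟨2, ?_⟩
      rw [zero_smul, sub_zero, pow_two]
      show ⁅π t, ⁅π t, π x⁆⁆ = 0
      rw [← LieHom.map_lie, ← LieHom.map_lie, hx, map_zero]
    rw [h2, Module.End.mem_eigenspace_iff, zero_smul] at h3
    exact h3
  exact exists_cartan_of_commuting {x : g.fixedSubalgebra | (x : L) ∈ H}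
    (fun s hs t ht => Subtype.ext (habel s hs t ht))
    (fun t ht x hx => Subtype.ext (hss t ht x (congrArg Subtype.val hx)))
end

section
/- Let n be a positive integer. For each divisor d of n define the rational number c_n(d) = (n/d²) · ∏_{p∣d}(−p) · ∏_{p∣gcd(d,n/d)}(1−p⁻¹) · ∏_{p∣(n/d)}(1+p⁻¹), where all products run over primes p. Then for every divisor t of n one has ∑_{d∣n} c_n(d)·gcd(t,d) = n/t. -/
open Finset

/-- The coefficients `c_n(d)` of the dimension formula:
`c_n(d) = (n/d²) · ∏_{p∣d}(−p) · ∏_{p∣gcd(d,n/d)}(1−p⁻¹) · ∏_{p∣(n/d)}(1+p⁻¹)`,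
all products running over primes `p`. -/
noncomputable def dimFormulaCoeff (n d : ℕ) : ℚ :=
  ((n : ℚ) / (d : ℚ) ^ 2) * (∏ p ∈ d.primeFactors, (-(p : ℚ))) *
    (∏ p ∈ (Nat.gcd d (n / d)).primeFactors, (1 - (p : ℚ)⁻¹)) *
    (∏ p ∈ (n / d).primeFactors, (1 + (p : ℚ)⁻¹))

theorem dimAux_prod_mul {a b : ℕ} (h : Nat.Coprime a b) (f : ℕ → ℚ) :
    ∏ p ∈ (a * b).primeFactors, f p = (∏ p ∈ a.primeFactors, f p) * ∏ p ∈ b.primeFactors, f p := by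
  rw [h.primeFactors_mul, Finset.prod_union h.disjoint_primeFactors]

theorem dimAux_coeff_mul {a b d e : ℕ} (h : Nat.Coprime a b) (ha : 0 < a) (hb : 0 < b)
    (hd : d ∣ a) (he : e ∣ b) :
    dimFormulaCoeff (a * b) (d * e) = dimFormulaCoeff a d * dimFormulaCoeff b e := by
  obtain ⟨a', rfl⟩ := hd
  obtain ⟨b', rfl⟩ := he
  have hd0 : 0 < d := Nat.pos_of_mul_pos_right ha
  have he0 : 0 < e := Nat.pos_of_mul_pos_right hb
  have h1 : Nat.Coprime d e := h.coprime_mul_right.coprime_mul_right_right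
  have h2 : Nat.Coprime d b' := h.coprime_mul_right.coprime_mul_left_right
  have h3 : Nat.Coprime a' e := h.coprime_mul_left.coprime_mul_right_right
  have h4 : Nat.Coprime a' b' := h.coprime_mul_left.coprime_mul_left_right
  have e1 : d * a' * (e * b') / (d * e) = a' * b' := by
    rw [show d * a' * (e * b') = (d * e) * (a' * b') by ring]
    exact Nat.mul_div_cancel_left _ (Nat.mul_pos hd0 he0)
  have e2 : d * a' / d = a' := Nat.mul_div_cancel_left _ hd0
  have e3 : e * b' / e = b' := Nat.mul_div_cancel_left _ he0
  have e4 : Nat.gcd (d * e) (a' * b') = Nat.gcd d a' * Nat.gcd e b' := by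
    rw [h4.gcd_mul, h1.mul_gcd, h1.mul_gcd, h3.symm.gcd_eq_one, h2.gcd_eq_one]
    ring
  have h5 : Nat.Coprime (Nat.gcd d a') (Nat.gcd e b') :=
    (h1.coprime_dvd_left (Nat.gcd_dvd_left _ _)).coprime_dvd_right (Nat.gcd_dvd_left _ _)
  unfold dimFormulaCoeff
  rw [e1, e2, e3, e4, dimAux_prod_mul h1, dimAux_prod_mul h4, dimAux_prod_mul h5]
  push_cast
  have : (d : ℚ) ≠ 0 := by positivity
  have : (e : ℚ) ≠ 0 := by positivity
  field_simp

theorem dimAux_coeff_zero {p k : ℕ} (hp : p.Prime) (hk : 0 < k) :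
    dimFormulaCoeff (p ^ k) (p ^ 0) = (p : ℚ) ^ k * (1 + (p : ℚ)⁻¹) := by
  simp [dimFormulaCoeff, Nat.primeFactors_prime_pow hk.ne' hp]

theorem dimAux_coeff_mid {p k i : ℕ} (hp : p.Prime) (hi : 0 < i) (hk : i < k) :
    dimFormulaCoeff (p ^ k) (p ^ i) =
      (p : ℚ) ^ k / ((p : ℚ) ^ i) ^ 2 * (-(p : ℚ)) * (1 - (p : ℚ)⁻¹) * (1 + (p : ℚ)⁻¹) := by
  have h1 : p ^ k / p ^ i = p ^ (k - i) := Nat.pow_div hk.le hp.pos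
  have h2 : (Nat.gcd (p ^ i) (p ^ (k - i))).primeFactors = {p} := by
    rw [Nat.primeFactors_gcd (pow_ne_zero _ hp.ne_zero) (pow_ne_zero _ hp.ne_zero),
      Nat.primeFactors_prime_pow hi.ne' hp, Nat.primeFactors_prime_pow (by omega) hp]
    simp
  unfold dimFormulaCoeff
  rw [h1, h2, Nat.primeFactors_prime_pow hi.ne' hp, Nat.primeFactors_prime_pow (by omega) hp]
  simp

theorem dimAux_coeff_top {p k : ℕ} (hp : p.Prime) (hk : 0 < k) :
    dimFormulaCoeff (p ^ k) (p ^ k) = (p : ℚ) ^ k / ((p : ℚ) ^ k) ^ 2 * (-(p : ℚ)) := by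
  have h1 : p ^ k / p ^ k = 1 := Nat.div_self (pow_pos hp.pos _)
  unfold dimFormulaCoeff
  rw [h1, Nat.primeFactors_prime_pow hk.ne' hp]
  simp

theorem dimAux_gcd_pow (p i j : ℕ) : Nat.gcd (p ^ j) (p ^ i) = p ^ (min i j) := by
  rcases le_total i j with h | h
  · rw [min_eq_left h, Nat.gcd_eq_right (pow_dvd_pow p h)]
  · rw [min_eq_right h, Nat.gcd_eq_left (pow_dvd_pow p h)]

theorem dimAux_partial {p k j : ℕ} (hp : p.Prime) (m : ℕ) (hm : m < k) :
    ∑ i ∈ Finset.range (m + 1), dimFormulaCoeff (p ^ k) (p ^ i) * (Nat.gcd (p ^ j) (p ^ i) : ℚ) =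
      (p : ℚ) ^ k / (p : ℚ) ^ (min m j) + (p : ℚ) ^ k * (p : ℚ) ^ (min m j) / (p : ℚ) ^ (2 * m + 1)
      := by
  have hp0 : (p : ℚ) ≠ 0 := by exact_mod_cast hp.ne_zero
  induction m with
  | zero =>
    rw [Finset.sum_range_one, dimAux_coeff_zero hp hm]
    simp
    field_simp
  | succ m ih =>
    rw [Finset.sum_range_succ, ih (by omega), dimAux_coeff_mid hp (by omega) hm, dimAux_gcd_pow]
    push_cast
    rcases Nat.lt_or_ge m j with h | h
    · rw [min_eq_left h.le, min_eq_left (show m + 1 ≤ j from h)]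
      field_simp
      ring
    · rw [min_eq_right h, min_eq_right (show j ≤ m + 1 by omega)]
      field_simp
      ring

theorem dimAux_prime_pow {p k j : ℕ} (hp : p.Prime) (hk : 0 < k) (hj : j ≤ k) :
    ∑ d ∈ (p ^ k).divisors, dimFormulaCoeff (p ^ k) d * (Nat.gcd (p ^ j) d : ℚ) =
      ((p ^ k : ℕ) : ℚ) / ((p ^ j : ℕ) : ℚ) := by
  have hp0 : (p : ℚ) ≠ 0 := by exact_mod_cast hp.ne_zero
  obtain ⟨m, rfl⟩ : ∃ m, k = m + 1 := ⟨k - 1, by omega⟩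
  rw [Nat.sum_divisors_prime_pow hp, Finset.sum_range_succ, dimAux_partial hp m (by omega),
    dimAux_coeff_top hp hk, dimAux_gcd_pow]
  push_cast
  rcases Nat.lt_or_ge m j with h | h
  · obtain rfl : j = m + 1 := by omega
    rw [min_eq_left h.le, min_self]
    field_simp
    ring
  · rw [min_eq_right h, min_eq_right hj]
    field_simp
    ring

/-- For every positive integer `n` and every divisor `t` of `n`,
`∑_{d∣n} c_n(d) · gcd(t,d) = n/t`. -/
theorem sum_dimFormulaCoeff_mul_gcd (n : ℕ) (hn : 0 < n) (t : ℕ) (ht : t ∣ n) :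
    ∑ d ∈ n.divisors, dimFormulaCoeff n d * (Nat.gcd t d : ℚ) = (n : ℚ) / (t : ℚ) := by
  induction n using Nat.recOnPosPrimePosCoprime generalizing t with
  | prime_pow p k hp hk =>
    obtain ⟨j, hj, rfl⟩ := (Nat.dvd_prime_pow hp).1 ht
    exact dimAux_prime_pow hp hk hj
  | zero => omega
  | one =>
    obtain rfl := Nat.dvd_one.1 ht
    simp [dimFormulaCoeff]
  | coprime a b ha hb hab iha ihb =>
    obtain ⟨s, u, hs, hu, rfl⟩ := (Nat.dvd_mul).1 ht
    have hsu : Nat.Coprime s u := (hab.coprime_dvd_left hs).coprime_dvd_right hu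
    have key := congrArg₂ (· * ·) (iha (by omega) s hs) (ihb (by omega) u hu)
    simp only [Finset.sum_mul_sum] at key
    rw [← Finset.sum_product'] at key
    rw [Nat.divisors_mul, Finset.mul_def, Finset.sum_image]
    · push_cast
      rw [mul_div_mul_comm, ← key]
      refine Finset.sum_congr rfl ?_
      rintro ⟨d, e⟩ hde
      simp only [Finset.mem_product, Nat.mem_divisors] at hde
      obtain ⟨⟨hd, -⟩, he, -⟩ := hde
      have hc : Nat.gcd (s * u) (d * e) = Nat.gcd s d * Nat.gcd u e := by
        have h1 : Nat.Coprime d e := (hab.coprime_dvd_left hd).coprime_dvd_right he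
        have h2 : Nat.Coprime s e := (hab.coprime_dvd_left hs).coprime_dvd_right he
        have h3 : Nat.Coprime d u := (hab.coprime_dvd_left hd).coprime_dvd_right hu
        rw [h1.gcd_mul, hsu.mul_gcd, hsu.mul_gcd, h2.gcd_eq_one, h3.symm.gcd_eq_one]
        ring
      simp only
      rw [hc, dimAux_coeff_mul hab (by omega) (by omega) hd he]
      push_cast
      ring
    · exact hab.mul_injOn_divisors
end

section
/- Let n be a positive integer. The linear system ∑_{d∣n} a_d·gcd(t,d) = n/t (one equation for each divisor t of n) has at most one solution (a_d)_{d∣n} in the rationals; consequently, if rationals (a_d)_{d∣n} satisfy ∑_{d∣n} a_d·gcd(t,d) = n/t for all divisors t of n, then a_d = c_n(d) for every divisor d of n, where c_n(d) = (n/d²) · ∏_{p∣d}(−p) · ∏_{p∣gcd(d,n/d)}(1−p⁻¹) · ∏_{p∣(n/d)}(1+p⁻¹) with products over primes p. -/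
open Finset

theorem aux_unique (n : ℕ) (hn : 0 < n) (e : ℕ → ℚ)
    (he : ∀ t : ℕ, t ∣ n → ∑ d ∈ n.divisors, e d * (Nat.gcd t d : ℚ) = 0) :
    ∀ d : ℕ, d ∣ n → e d = 0 := by
  have hgcd : ∀ t d : ℕ, t ∣ n →
      (Nat.gcd t d : ℚ) = ∑ k ∈ t.divisors, if k ∣ d then (Nat.totient k : ℚ) else 0 := by
    intro t d ht
    have ht0 : t ≠ 0 := (Nat.pos_of_dvd_of_pos ht hn).ne'
    rw [← Finset.sum_filter]
    conv_lhs => rw [← Nat.sum_totient (Nat.gcd t d)]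
    push_cast
    refine Finset.sum_congr ?_ (fun _ _ => rfl)
    ext k
    simp [Nat.dvd_gcd_iff, ht0]
  set E : ℕ → ℚ := fun k => ∑ d ∈ n.divisors, if k ∣ d then e d else 0 with hE
  have h1 : ∀ t, t ∣ n → ∑ k ∈ t.divisors, (Nat.totient k : ℚ) * E k = 0 := by
    intro t ht
    rw [← he t ht]
    simp only [hE, Finset.mul_sum]
    rw [Finset.sum_comm]
    refine Finset.sum_congr rfl (fun d _ => ?_)
    rw [hgcd t d ht, Finset.mul_sum]
    refine Finset.sum_congr rfl (fun k _ => ?_)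
    split_ifs <;> ring
  have h2 : ∀ t, t ∣ n → E t = 0 := by
    intro t
    induction t using Nat.strong_induction_on with
    | _ t ih =>
      intro ht
      have htp := Nat.pos_of_dvd_of_pos ht hn
      have h := h1 t ht
      rw [Finset.sum_eq_single_of_mem t (Nat.mem_divisors_self t htp.ne')] at h
      · have : (Nat.totient t : ℚ) ≠ 0 := by
          exact_mod_cast (Nat.totient_pos.2 htp).ne'
        simpa [this] using h
      · intro k hk hkt
        have hk' := Nat.dvd_of_mem_divisors hk
        rw [ih k (lt_of_le_of_ne (Nat.le_of_dvd htp hk') hkt) (hk'.trans ht), mul_zero]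
  have h3 : ∀ m d, d ∣ n → n - d < m → e d = 0 := by
    intro m
    induction m with
    | zero => intro d _ h; omega
    | succ m ih =>
      intro d hd hm
      have h := h2 d hd
      simp only [hE] at h
      rw [Finset.sum_eq_single_of_mem d (Nat.mem_divisors.2 ⟨hd, hn.ne'⟩)] at h
      · simpa using h
      · intro k hk hkd
        split_ifs with hdk
        · have hk' := Nat.dvd_of_mem_divisors hk
          have := Nat.le_of_dvd hn hk'
          have h5 := Nat.le_of_dvd (Nat.pos_of_dvd_of_pos hk' hn) hdk
          exact ih k hk' (by omega)
        · rfl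
  intro d hd
  exact h3 (n - d + 1) d hd (by omega)

theorem aux_coeff_mul {a b d e : ℕ} (hab : Nat.Coprime a b) (hd : d ∣ a) (he : e ∣ b)
    : dimFormulaCoeff (a * b) (d * e) = dimFormulaCoeff a d * dimFormulaCoeff b e := by
  unfold dimFormulaCoeff
  have hda := Nat.div_dvd_of_dvd hd
  have heb := Nat.div_dvd_of_dvd he
  have c1 : Nat.Coprime d e := Nat.Coprime.of_dvd hd he hab
  have c2 : Nat.Coprime (a / d) (b / e) := Nat.Coprime.of_dvd hda heb hab
  have c3 : Nat.Coprime d (b / e) := Nat.Coprime.of_dvd hd heb hab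
  have c4 : Nat.Coprime (a / d) e := Nat.Coprime.of_dvd hda he hab
  have c5 : Nat.Coprime (d.gcd (a / d)) (e.gcd (b / e)) :=
    Nat.Coprime.of_dvd (Nat.gcd_dvd_left _ _) (Nat.gcd_dvd_left _ _) c1
  have g : Nat.gcd (d * e) (a / d * (b / e)) = d.gcd (a / d) * e.gcd (b / e) := by
    rw [c1.mul_gcd, c2.gcd_mul, c2.gcd_mul, c3.gcd_eq_one, c4.symm.gcd_eq_one]
    ring
  rw [← Nat.div_mul_div_comm hd he, g, c1.primeFactors_mul, c2.primeFactors_mul,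
    c5.primeFactors_mul, Finset.prod_union c1.disjoint_primeFactors,
    Finset.prod_union c2.disjoint_primeFactors, Finset.prod_union c5.disjoint_primeFactors]
  push_cast
  rw [mul_pow, mul_div_mul_comm]
  ring

theorem aux_coeff_pow_zero {p k : ℕ} (hp : p.Prime) (hk : 0 < k) :
    dimFormulaCoeff (p ^ k) (p ^ 0) = (p : ℚ) ^ (k : ℤ) * (1 + (p : ℚ)⁻¹) := by
  simp [dimFormulaCoeff, Nat.primeFactors_prime_pow hk.ne' hp]

theorem aux_coeff_pow_top {p k : ℕ} (hp : p.Prime) (hk : 0 < k) :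
    dimFormulaCoeff (p ^ k) (p ^ k) = - (p : ℚ) ^ (1 - (k : ℤ)) := by
  have h0 : (p : ℚ) ≠ 0 := by exact_mod_cast hp.ne_zero
  have h1 : p ^ k / p ^ k = 1 := Nat.div_self (pow_pos hp.pos k)
  simp only [dimFormulaCoeff, Nat.primeFactors_prime_pow hk.ne' hp, h1]
  simp [zpow_sub₀ h0]
  field_simp

theorem aux_coeff_pow_mid {p k i : ℕ} (hp : p.Prime) (hi : 0 < i) (hik : i < k) :
    dimFormulaCoeff (p ^ k) (p ^ i) =
      (p : ℚ) ^ ((k : ℤ) - 2 * i) * ((p : ℚ)⁻¹ - p) := by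
  have h0 : (p : ℚ) ≠ 0 := by exact_mod_cast hp.ne_zero
  have h1 : p ^ k / p ^ i = p ^ (k - i) := Nat.pow_div hik.le hp.pos
  have h2 : Nat.gcd (p ^ i) (p ^ (k - i)) = p ^ (min i (k - i)) := by
    rcases le_total i (k - i) with h | h
    · rw [min_eq_left h, Nat.gcd_eq_left (pow_dvd_pow p h)]
    · rw [min_eq_right h, Nat.gcd_eq_right (pow_dvd_pow p h)]
  have h3 : min i (k - i) ≠ 0 := by omega
  have h4 : k - i ≠ 0 := by omega
  simp only [dimFormulaCoeff, h1, h2, Nat.primeFactors_prime_pow hi.ne' hp,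
    Nat.primeFactors_prime_pow h3 hp, Nat.primeFactors_prime_pow h4 hp, Finset.prod_singleton]
  have h5 : (p : ℚ) ^ ((k : ℤ) - 2 * i) = (p : ℚ) ^ k / ((p : ℚ) ^ i) ^ 2 := by
    rw [zpow_sub₀ h0, mul_comm (2 : ℤ), zpow_mul]
    norm_cast
  rw [h5]
  push_cast
  field_simp
  ring

theorem aux_partial {p k j : ℕ} (hp : p.Prime) (m : ℕ) (hm : m + 1 ≤ k) :
    ∑ i ∈ Finset.range (m + 1), dimFormulaCoeff (p ^ k) (p ^ i) * (p : ℚ) ^ ((min j i : ℕ) : ℤ) =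
      if m ≤ j then (p : ℚ) ^ ((k : ℤ) - m) * (1 + (p : ℚ)⁻¹)
      else (p : ℚ) ^ ((k : ℤ) - j) + (p : ℚ) ^ ((j : ℤ) + k - 1 - 2 * m) := by
  have h0 : (p : ℚ) ≠ 0 := by exact_mod_cast hp.ne_zero
  induction m with
  | zero => 
    rw [Finset.sum_range_one, aux_coeff_pow_zero hp (by omega)]
    simp
  | succ m ih =>
    rw [Finset.sum_range_succ, ih (by omega), aux_coeff_pow_mid hp (by omega) (by omega)]
    rcases lt_trichotomy m j with h | h | h
    · rw [if_pos h.le, if_pos (by omega), min_eq_right (by omega)]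
      push_cast
      simp only [zpow_sub₀ h0, zpow_add₀ h0, mul_add, mul_comm (2 : ℤ), zpow_mul, zpow_one, mul_one]
      simp only [zpow_natCast, zpow_ofNat]
      field_simp
      ring
    · subst h
      rw [if_pos le_rfl, if_neg (by omega), min_eq_left (by omega)]
      push_cast
      simp only [zpow_sub₀ h0, zpow_add₀ h0, mul_add, mul_comm (2 : ℤ), zpow_mul, zpow_one, mul_one]
      simp only [zpow_natCast, zpow_ofNat]
      field_simp
      ring
    · rw [if_neg (by omega), if_neg (by omega), min_eq_left (by omega)]
      push_cast
      simp only [zpow_sub₀ h0, zpow_add₀ h0, mul_add, mul_comm (2 : ℤ), zpow_mul, zpow_one, mul_one]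
      simp only [zpow_natCast, zpow_ofNat]
      field_simp
      ring

theorem aux_exists (n : ℕ) (hn : 0 < n) : ∀ t : ℕ, t ∣ n →
    ∑ d ∈ n.divisors, dimFormulaCoeff n d * (Nat.gcd t d : ℚ) = (n : ℚ) / (t : ℚ) := by
  induction n using Nat.recOnPosPrimePosCoprime with
  | zero => omega
  | one =>
    intro t ht
    obtain rfl := Nat.dvd_one.1 ht
    simp [dimFormulaCoeff]
  | prime_pow p k hp hk =>
    intro t ht
    obtain ⟨j, hj, rfl⟩ := (Nat.dvd_prime_pow hp).1 ht
    have h0 : (p : ℚ) ≠ 0 := by exact_mod_cast hp.ne_zero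
    have hg : ∀ i, ((Nat.gcd (p ^ j) (p ^ i) : ℕ) : ℚ) = (p : ℚ) ^ ((min j i : ℕ) : ℤ) := by
      intro i
      rw [zpow_natCast]
      rcases le_total j i with h | h
      · rw [min_eq_left h, Nat.gcd_eq_left (pow_dvd_pow p h)]; push_cast; rfl
      · rw [min_eq_right h, Nat.gcd_eq_right (pow_dvd_pow p h)]; push_cast; rfl
    rw [Nat.sum_divisors_prime_pow hp]
    simp only [hg]
    obtain ⟨m, rfl⟩ : ∃ m, k = m + 1 := ⟨k - 1, by omega⟩
    rw [Finset.sum_range_succ, aux_partial hp m le_rfl, aux_coeff_pow_top hp hk, min_eq_left hj]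
    split_ifs with h
    · have : j = m ∨ j = m + 1 := by omega
      rcases this with rfl | rfl
      all_goals
        push_cast
        simp only [zpow_sub₀ h0, zpow_add₀ h0, mul_add, mul_comm (2 : ℤ), zpow_mul, zpow_one,
          mul_one]
        simp only [zpow_natCast, zpow_ofNat]
        field_simp
        ring
    · push_cast
      simp only [zpow_sub₀ h0, zpow_add₀ h0, mul_add, mul_comm (2 : ℤ), zpow_mul, zpow_one,
          mul_one]
      simp only [zpow_natCast, zpow_ofNat]
      field_simp
      ring
  | coprime a b ha hb hab iha ihb =>
    intro t ht
    obtain ⟨t1, t2, h1, h2, rfl⟩ := (Nat.dvd_mul).1 ht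
    rw [Nat.divisors_mul, Finset.mul_def, Finset.sum_image, Finset.sum_product]
    · have e := congrArg₂ (· * ·) (iha (by omega) t1 h1) (ihb (by omega) t2 h2)
      simp only [Finset.sum_mul_sum] at e
      push_cast
      rw [mul_div_mul_comm, ← e]
      refine Finset.sum_congr rfl (fun x hx => Finset.sum_congr rfl (fun y hy => ?_))
      have hx := Nat.dvd_of_mem_divisors hx
      have hy := Nat.dvd_of_mem_divisors hy
      rw [aux_coeff_mul hab hx hy, (Nat.Coprime.of_dvd h1 h2 hab).mul_gcd,
        (Nat.Coprime.of_dvd hx hy hab).gcd_mul, (Nat.Coprime.of_dvd hx hy hab).gcd_mul,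
        (Nat.Coprime.of_dvd h1 hy hab).gcd_eq_one,
        (Nat.Coprime.of_dvd hx h2 hab).symm.gcd_eq_one]
      push_cast
      ring
    · simpa using hab.mul_injOn_divisors

/-- For a positive integer `n`, the linear system
`∑_{d∣n} a_d · gcd(t,d) = n/t` (one equation for each divisor `t` of `n`) has at most one
rational solution `(a_d)_{d∣n}`; consequently any solution satisfies `a_d = c_n(d)` for every
divisor `d` of `n`. -/
theorem dimFormulaCoeff_system_unique (n : ℕ) (hn : 0 < n) :
    (∀ a b : ℕ → ℚ,
      (∀ t : ℕ, t ∣ n → ∑ d ∈ n.divisors, a d * (Nat.gcd t d : ℚ) = (n : ℚ) / (t : ℚ)) →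
      (∀ t : ℕ, t ∣ n → ∑ d ∈ n.divisors, b d * (Nat.gcd t d : ℚ) = (n : ℚ) / (t : ℚ)) →
      ∀ d : ℕ, d ∣ n → a d = b d) ∧
    (∀ a : ℕ → ℚ,
      (∀ t : ℕ, t ∣ n → ∑ d ∈ n.divisors, a d * (Nat.gcd t d : ℚ) = (n : ℚ) / (t : ℚ)) →
      ∀ d : ℕ, d ∣ n → a d = dimFormulaCoeff n d) := by
  have key : ∀ a b : ℕ → ℚ,
      (∀ t : ℕ, t ∣ n → ∑ d ∈ n.divisors, a d * (Nat.gcd t d : ℚ) = (n : ℚ) / (t : ℚ)) →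
      (∀ t : ℕ, t ∣ n → ∑ d ∈ n.divisors, b d * (Nat.gcd t d : ℚ) = (n : ℚ) / (t : ℚ)) →
      ∀ d : ℕ, d ∣ n → a d = b d := by
    intro a b ha hb d hd
    have h := aux_unique n hn (fun d => a d - b d) (by
      intro t ht
      simp only [sub_mul, Finset.sum_sub_distrib]
      rw [ha t ht, hb t ht, sub_self]) d hd
    exact sub_eq_zero.1 h
  exact ⟨key, fun a ha => key a _ ha (aux_exists n hn)⟩
end

section
/- Let L be a positive-definite integral lattice, i.e. a free ℤ-module of finite rank with a symmetric, positive-definite bilinear form ⟨·,·⟩ : L × L → ℤ, and let ν be an isometry of L of finite order m. Extend ν ℚ-linearly to V := L ⊗_ℤ ℚ and let π_ν := (1/m)∑_{i=0}^{m−1} νⁱ be the projection of V onto the ν-fixed subspace. Then π_ν(L') = (L^ν)', i.e. the image under π_ν of the dual lattice L' = {x ∈ V | ⟨x,α⟩ ∈ ℤ for all α ∈ L} equals the set {x ∈ V | νx = x and ⟨x,α⟩ ∈ ℤ for all α ∈ L^ν}, where L^ν := {α ∈ L | να = α} is the fixed-point sublattice. -/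
open Finset

/-- Let `L` be a positive-definite integral lattice (realised as a finitely
generated `ℤ`-submodule of a finite-dimensional `ℚ`-vector space `V = L ⊗ ℚ` which spans `V`,
equipped with a symmetric bilinear form `B` that is `ℤ`-valued and positive definite on `L`),
and let `ν` be an isometry of `L` with `ν ^ m = 1`, `m > 0`.  Then the image of the dual
lattice `L'` under the projection `π_ν = (1/m) ∑_{i<m} νⁱ` onto the `ν`-fixed subspace equals
the dual lattice `(L^ν)'` of the fixed-point sublattice `L^ν`, taken inside the `ν`-fixed
subspace of `V`. -/
theorem image_dual_lattice_eq_dual_fixed_lattice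
    {V : Type*} [AddCommGroup V] [Module ℚ V] [FiniteDimensional ℚ V]
    (B : V →ₗ[ℚ] V →ₗ[ℚ] ℚ)
    (hsymm : ∀ x y : V, B x y = B y x)
    (L : Submodule ℤ V) (hfg : L.FG)
    (hspan : Submodule.span ℚ (L : Set V) = ⊤)
    (hint : ∀ x ∈ L, ∀ y ∈ L, ∃ k : ℤ, B x y = (k : ℚ))
    (hpos : ∀ x ∈ L, x ≠ 0 → 0 < B x x)
    (ν : V ≃ₗ[ℚ] V)
    (hνL : ∀ x : V, x ∈ L ↔ ν x ∈ L)
    (hνB : ∀ x ∈ L, ∀ y ∈ L, B (ν x) (ν y) = B x y)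
    (m : ℕ) (hm : 0 < m) (hνm : ν ^ m = 1) :
    (fun x : V => (m : ℚ)⁻¹ • ∑ i ∈ Finset.range m, (ν ^ i) x) ''
        {x : V | ∀ α ∈ L, ∃ k : ℤ, B x α = (k : ℚ)} =
      {x : V | ν x = x ∧ ∀ α ∈ L, ν α = α → ∃ k : ℤ, B x α = (k : ℚ)} := by
  have : Module.IsTorsionFree ℤ V := Module.IsTorsionFree.trans_faithfulSMul ℤ ℚ V
  have hclear : ∀ v : V, ∃ n : ℤ, n ≠ 0 ∧ n • v ∈ L := by
    intro v
    have hv : v ∈ Submodule.span ℚ (L : Set V) := by rw [hspan]; trivial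
    induction hv using Submodule.span_induction with
    | mem x hx => exact ⟨1, one_ne_zero, by simpa using hx⟩
    | zero => exact ⟨1, one_ne_zero, by simp⟩
    | add x y _ _ hx hy =>
      obtain ⟨a, ha, hax⟩ := hx
      obtain ⟨b, hb, hby⟩ := hy
      refine ⟨a * b, mul_ne_zero ha hb, ?_⟩
      rw [smul_add]
      refine L.add_mem ?_ ?_
      · rw [mul_comm, mul_smul]; exact L.smul_mem b hax
      · rw [mul_smul]; exact L.smul_mem a hby
    | smul q x _ hx =>
      obtain ⟨a, ha, hax⟩ := hx
      refine ⟨a * q.den, mul_ne_zero ha (by exact_mod_cast q.den_nz), ?_⟩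
      have h : (a * (q.den : ℤ)) • (q • x) = q.num • (a • x) := by
        simp only [← Int.cast_smul_eq_zsmul ℚ, smul_smul]
        congr 1
        push_cast
        have := Rat.den_mul_eq_num q
        rw [← this]; ring
      rw [h]
      exact L.smul_mem _ hax
  have hBpos : ∀ v : V, B v v = 0 → v = 0 := by
    intro v hv
    obtain ⟨n, hn, hL⟩ := hclear v
    by_contra h0
    have := hpos _ hL (smul_ne_zero hn h0)
    simp [hv] at this
  have hνB' : ∀ x y : V, B (ν x) (ν y) = B x y := by
    intro x y
    obtain ⟨a, ha, hax⟩ := hclear x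
    obtain ⟨b, hb, hby⟩ := hclear y
    have h := hνB _ hax _ hby
    simp only [map_zsmul, LinearMap.smul_apply] at h
    exact smul_right_injective ℚ ha (smul_right_injective ℚ hb (by simpa [mul_left_comm] using h))
  have hm0 : (m : ℚ) ≠ 0 := by exact_mod_cast hm.ne'
  have hπfix : ∀ x : V, ν ((m : ℚ)⁻¹ • ∑ i ∈ Finset.range m, (ν ^ i) x) =
      (m : ℚ)⁻¹ • ∑ i ∈ Finset.range m, (ν ^ i) x := by
    intro x
    rw [map_smul, map_sum]
    congr 1
    have h1 : ∀ i, ν ((ν ^ i) x) = (ν ^ (i + 1)) x := by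
      intro i; rw [pow_succ']; rfl
    simp only [h1]
    have h2 := Finset.sum_range_succ (fun i => (ν ^ i) x) m
    rw [Finset.sum_range_succ'] at h2
    rw [hνm, pow_zero] at h2
    exact add_right_cancel h2
  have hπB : ∀ x α : V, ν α = α →
      B ((m : ℚ)⁻¹ • ∑ i ∈ Finset.range m, (ν ^ i) x) α = B x α := by
    intro x α hα
    have h1 : ∀ i : ℕ, B ((ν ^ i) x) α = B x α := by
      intro i
      induction i with
      | zero => simp
      | succ i ih =>
        rw [← ih, ← hνB' ((ν ^ i) x) α, hα, pow_succ']; rfl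
    simp only [map_smul, map_sum, LinearMap.smul_apply, LinearMap.sum_apply, h1]
    simp [hm0]
  ext x
  constructor
  · rintro ⟨y, hy, rfl⟩
    refine ⟨hπfix y, fun α hα hfix => ?_⟩
    obtain ⟨k, hk⟩ := hy α hα
    exact ⟨k, (hπB y α hfix).trans hk⟩
  · rintro ⟨hx, hxi⟩
    have : Module.Finite ℤ L := Module.Finite.iff_fg.mpr hfg
    let d : L →ₗ[ℤ] V := ((ν : V →ₗ[ℚ] V).restrictScalars ℤ - LinearMap.id) ∘ₗ L.subtype
    have hd : ∀ a : L, d a = ν a - a := fun a => rfl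
    have : Module.Free ℤ (LinearMap.range d) := inferInstance
    have : Module.Free ℤ L := inferInstance
    obtain ⟨s, hs⟩ := Module.projective_lifting_property d.rangeRestrict LinearMap.id
      d.surjective_rangeRestrict
    have hs' : ∀ a : L, d (s (d.rangeRestrict a)) = d a := fun a =>
      congrArg Subtype.val (LinearMap.congr_fun hs (d.rangeRestrict a))
    let r : L →ₗ[ℤ] L := LinearMap.id - s ∘ₗ d.rangeRestrict
    have hr : ∀ a : L, ν (r a : V) = r a := by
      intro a
      have : d (r a) = 0 := by
        change d (a - s (d.rangeRestrict a)) = 0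
        rw [map_sub, hs', sub_self]
      rw [hd] at this
      exact sub_eq_zero.mp this
    have hr' : ∀ a : L, ν (a : V) = a → r a = a := by
      intro a ha
      have h0 : d.rangeRestrict a = 0 := by
        apply Subtype.ext
        change d a = 0
        rw [hd, ha, sub_self]
      change a - s (d.rangeRestrict a) = a
      rw [h0, map_zero, sub_zero]
    let b := Module.Free.chooseBasis ℤ L
    have hli : LinearIndependent ℚ (fun i => (b i : V)) := by
      rw [← LinearIndependent.iff_fractionRing ℤ ℚ]
      exact b.linearIndependent.map' L.subtype L.ker_subtype
    have hspL : Submodule.span ℤ (Set.range fun i => (b i : V)) = L := by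
      have h := congrArg (Submodule.map L.subtype) b.span_eq
      rw [Submodule.map_span, ← Set.range_comp, Submodule.map_top, Submodule.range_subtype] at h
      exact h
    have hsp : ⊤ ≤ Submodule.span ℚ (Set.range fun i => (b i : V)) := by
      rw [← hspan, Submodule.span_le]
      intro v hv
      rw [SetLike.mem_coe, ← hspL] at hv
      exact Submodule.span_subset_span ℤ ℚ _ hv
    let bQ := Module.Basis.mk hli hsp
    let g : L →ₗ[ℤ] ℚ := (B x).restrictScalars ℤ ∘ₗ L.subtype ∘ₗ r
    let F : V →ₗ[ℚ] ℚ := bQ.constr ℚ (fun i => g (b i))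
    have hF : ∀ a : L, F a = B x (r a) := by
      have : F.restrictScalars ℤ ∘ₗ L.subtype = g := by
        apply b.ext
        intro i
        change F (b i : V) = g (b i)
        have h := bQ.constr_basis ℚ (fun i => g (b i)) i
        rwa [Module.Basis.mk_apply] at h
      exact fun a => LinearMap.congr_fun this a
    have hinj : Function.Injective B := by
      rw [injective_iff_map_eq_zero]
      intro v hv
      exact hBpos v (by rw [hv]; rfl)
    have hsurj : Function.Surjective B :=
      (LinearMap.injective_iff_surjective_of_finrank_eq_finrank
        (Subspace.dual_finrank_eq (K := ℚ) (V := V)).symm).mp hinj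
    obtain ⟨y, hy⟩ := hsurj F
    refine ⟨y, ?_, ?_⟩
    · intro α hα
      obtain ⟨k, hk⟩ := hxi (r ⟨α, hα⟩) (r ⟨α, hα⟩).2 (hr _)
      exact ⟨k, by rw [hy, ← hk]; exact hF ⟨α, hα⟩⟩
    · have key : ∀ w : V, ν w = w →
          B ((m : ℚ)⁻¹ • ∑ i ∈ Finset.range m, (ν ^ i) y) w = B x w := by
        intro w hw
        rw [hπB y w hw, hy]
        obtain ⟨n, hn, hL⟩ := hclear w
        have h1 := hF ⟨n • w, hL⟩
        rw [hr' ⟨n • w, hL⟩ (by simp [hw])] at h1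
        simp only [map_zsmul] at h1
        exact smul_right_injective ℚ hn h1
      apply sub_eq_zero.mp
      apply hBpos
      have h := key (((m : ℚ)⁻¹ • ∑ i ∈ Finset.range m, (ν ^ i) y) - x)
        (by rw [map_sub, hπfix, hx])
      rw [map_sub B, LinearMap.sub_apply]
      exact sub_eq_zero.mpr h
end
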